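/- arXiv:2106.11194 — 2 statements merged into one kernel-verified Lean document; each statement's English description precedes it below -/
import Mathlib

section
/- (Corollary 2.1.) Assume p := Σ_{j=1}^m p_j > δ, let K > 0 satisfy Σ_j p_j e^{−a_j K} = δ, and set ζ_M := max_{1≤j≤m} limsup_{t→∞} ∫_{t−σ_j(t)}^{t} β(s) ds and a⁺ := max_j a_j. If ζ_M < 1/(2δ + K Σ_{j=1}^m p_j a_j e^{−a_j K}), then K is locally exponentially stable for the Nicholson equation; in particular, this holds whenever ζ_M < 1/(δ(2 + a⁺K)). -/
/-- A solution of the Nicholson equation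
`x'(t) = β(t)(Σ_j p_j x(t−τ_j(t)) e^{−a_j x(t−σ_j(t))} − δ x(t))`, `t ≥ t₀`,
defined on `[t₀ − τbar, ∞)`, with admissible initial data. -/
def NicholsonSolution (m : ℕ) (p a : Fin m → ℝ) (δ t₀ τbar : ℝ)
    (β : ℝ → ℝ) (τ σ : Fin m → ℝ → ℝ) (x : ℝ → ℝ) : Prop :=
  ContinuousOn x (Set.Ici (t₀ - τbar)) ∧
  (∀ t ∈ Set.Ici t₀, HasDerivWithinAt x
      (β t * ((∑ j, p j * x (t - τ j t) * Real.exp (-(a j) * x (t - σ j t))) - δ * x t))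
      (Set.Ici t₀) t) ∧
  (∀ s, t₀ - τbar ≤ s → s < t₀ → 0 ≤ x s) ∧
  0 < x t₀

/-- The positive equilibrium `K` is locally exponentially stable for the
Nicholson equation. -/
def LocallyExpStable (m : ℕ) (p a : Fin m → ℝ) (δ t₀ τbar : ℝ)
    (β : ℝ → ℝ) (τ σ : Fin m → ℝ → ℝ) (K : ℝ) : Prop :=
  ∃ ε > 0, ∃ M ≥ (1 : ℝ), ∃ lam > 0, ∀ x : ℝ → ℝ,
    NicholsonSolution m p a δ t₀ τbar β τ σ x →
    sSup ((fun s => |x s - K|) '' Set.Icc (t₀ - τbar) t₀) ≤ ε →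
    ∀ t ∈ Set.Ici t₀, |x t - K| ≤
      M * Real.exp (-lam * (t - t₀)) *
        sSup ((fun s => |x s - K|) '' Set.Icc (t₀ - τbar) t₀)

/-!
Write `y = x - K`. Linearising at the equilibrium with `c j = p j * exp (-a j * K)` and
`d j = K * a j * c j`, the equation reads `y' = β v`, where `v` differs by a remainder of size
`o(‖y‖)` from `∑ j, (c j * (y (t - τ j) - y t) - d j * y (t - σ j))`.

Compare `|y|` with an exponential `h` and look at the first time `t` at which they touch. The
history of `y` is bounded by `h`, hence by about `|y t|` when `h` decays slowly. The terms with `c`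
therefore nearly cancel, while each `d`-term pushes `y` back towards `0` up to the increment
`y t - y (t - σ j)`, which the mean value inequality bounds by `(2 ∑ c + ∑ d) ζ |y t|`, where `ζ`
bounds the integrals of `β` over the delay windows. So `|y|` cannot cross `h` as soon as
`(2 ∑ c + ∑ d) ζ < 1`. As `ζ` is only an eventual bound, a cruder growing exponential controls the
solution until it takes effect.
-/

section

open Set Filter Topology Real

section Barrier

theorem pos_of_deriv_pos_at_first_zero {g g' : ℝ → ℝ} {a b : ℝ} (hg : ContinuousOn g (Icc a b))
    (hg' : ∀ t ∈ Ioc a b, HasDerivAt g (g' t) t) (ha : 0 < g a)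
    (hzero : ∀ t ∈ Ioc a b, (∀ s ∈ Icc a t, 0 ≤ g s) → g t = 0 → 0 < g' t) :
    ∀ t ∈ Icc a b, 0 < g t := by
  by_contra! ⟨t₁, ht₁, hgt₁⟩
  have hcompact : IsCompact (Icc a b ∩ g ⁻¹' Iic 0) :=
    isCompact_Icc.of_isClosed_subset
      (hg.preimage_isClosed_of_isClosed isClosed_Icc isClosed_Iic) inter_subset_left
  obtain ⟨t, ⟨htab, hgt⟩, hleast⟩ := hcompact.exists_isLeast ⟨t₁, ht₁, hgt₁⟩
  have hat : a < t := htab.1.lt_of_ne (by rintro rfl; exact ha.not_ge hgt)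
  have hbefore : MapsTo g (Ico a t) (Ici 0) := fun s hs => mem_Ici.2 <|
    le_of_not_gt fun hgs => (hleast ⟨⟨hs.1, hs.2.le.trans htab.2⟩, hgs.le⟩).not_gt hs.2
  have hnonneg : MapsTo g (Icc a t) (Ici 0) := by
    have hclosure : closure (Ico a t) = Icc a t := closure_Ico hat.ne
    simpa only [hclosure, closure_Ici] using hbefore.closure_of_continuousOn
      (hclosure ▸ hg.mono (Icc_subset_Icc_right htab.2))
  have hgt0 : g t = 0 := le_antisymm hgt (hnonneg (right_mem_Icc.2 hat.le))
  have hmin : IsLocalMinOn g (Icc a t) t :=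
    IsMinOn.localize fun s hs => hgt0.trans_le (hnonneg hs)
  have hleft : a - t ∈ posTangentConeAt (Icc a t) t :=
    sub_mem_posTangentConeAt_of_segment_subset
      ((convex_Icc a t).segment_subset (right_mem_Icc.2 hat.le) (left_mem_Icc.2 hat.le))
  have hslope : 0 ≤ (a - t) * g' t := by
    simpa using hmin.hasFDerivWithinAt_nonneg
      (hg' t ⟨hat, htab.2⟩).hasDerivWithinAt.hasFDerivWithinAt hleft
  nlinarith [hzero t ⟨hat, htab.2⟩ (fun s hs => hnonneg hs) hgt0]

theorem abs_lt_mul_exp_of_mul_deriv_lt {y y' : ℝ → ℝ} {a b A μ : ℝ}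
    (hy : ContinuousOn y (Icc a b)) (hy' : ∀ t ∈ Ioc a b, HasDerivAt y (y' t) t)
    (ha : |y a| < A)
    (htouch : ∀ t ∈ Ioc a b, (∀ s ∈ Icc a t, |y s| ≤ A * exp (μ * (s - a))) →
      |y t| = A * exp (μ * (t - a)) → y t * y' t < μ * |y t| ^ 2) :
    ∀ t ∈ Icc a b, |y t| < A * exp (μ * (t - a)) := by
  have hA : 0 < A := (abs_nonneg _).trans_lt ha
  have hpos (t : ℝ) : 0 < A * exp (μ * (t - a)) := by positivity
  have hexp (t : ℝ) : HasDerivAt (fun s => A * exp (μ * (s - a))) (μ * (A * exp (μ * (t - a)))) t :=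
    (((((hasDerivAt_id t).sub_const a).const_mul μ).exp).const_mul A).congr_deriv (by
      simp only [id]; ring)
  -- Squaring turns the barrier for `|y|` into a differentiable one.
  have hsq : ∀ t ∈ Icc a b, 0 < (A * exp (μ * (t - a))) ^ 2 - y t ^ 2 := by
    refine pos_of_deriv_pos_at_first_zero (by fun_prop)
      (fun t ht => ((hexp t).fun_pow 2).fun_sub ((hy' t ht).fun_pow 2))
      (by simpa [sq_lt_sq, abs_of_pos hA] using ha) fun t ht hle heq => ?_
    have habs : |y t| = A * exp (μ * (t - a)) := by
      rw [← abs_of_pos (hpos t), ← sq_eq_sq_iff_abs_eq_abs]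
      linarith
    have hlt := htouch t ht (fun s hs => abs_le_of_sq_le_sq (by linarith [hle s hs]) (hpos s).le)
      habs
    rw [← habs]
    simp only [Nat.add_one_sub_one, pow_one, Nat.cast_ofNat]
    linarith
  exact fun t ht => abs_lt_of_sq_lt_sq (by linarith [hsq t ht]) (hpos t).le

end Barrier

section LinearEquation

variable {ι : Type*} [Fintype ι] {c d : ι → ℝ} {τ σ : ι → ℝ → ℝ} {β : ℝ → ℝ}
  {t₀ T η ε₀ : ℝ} {y v : ℝ → ℝ}

/-- The linear delayed feedback `∑ j, (c j * (y (t - τ j t) - y t) - d j * y (t - σ j t))`: the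
`c`-part vanishes on constants, the `d`-part is restoring. -/
def linearFeedback (c d : ι → ℝ) (τ σ : ι → ℝ → ℝ) (y : ℝ → ℝ) (t : ℝ) : ℝ :=
  ∑ j, (c j * (y (t - τ j t) - y t) - d j * y (t - σ j t))

/-- `y` solves `y' = β v` on `[t₀, ∞)`, where the velocity `v` is the linear feedback up to a
relative error `η`, as long as `y` stays below `ε₀` on the window `[t - T, t]`. This is the form
taken by a nonlinear delay equation near an equilibrium, with `y` the deviation from it. -/
structure IsPerturbedLinearSolution (c d : ι → ℝ) (τ σ : ι → ℝ → ℝ) (β : ℝ → ℝ)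
    (t₀ T η ε₀ : ℝ) (y v : ℝ → ℝ) : Prop where
  continuousOn : ContinuousOn y (Ici (t₀ - T))
  hasDerivWithinAt : ∀ t ∈ Ici t₀, HasDerivWithinAt y (β t * v t) (Ici t₀) t
  abs_sub_linearFeedback_le : ∀ t ∈ Ici t₀, ∀ W ∈ Icc 0 ε₀, (∀ s ∈ Icc (t - T) t, |y s| ≤ W) →
    |v t - linearFeedback c d τ σ y t| ≤ η * W

theorem abs_linearFeedback_le (hc : ∀ j, 0 ≤ c j) (hd : ∀ j, 0 ≤ d j) {t W : ℝ}
    (hτ : ∀ j, τ j t ∈ Icc 0 T) (hσ : ∀ j, σ j t ∈ Icc 0 T)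
    (hy : ∀ s ∈ Icc (t - T) t, |y s| ≤ W) :
    |linearFeedback c d τ σ y t| ≤ (2 * ∑ j, c j + ∑ j, d j) * W := by
  rw [Finset.mul_sum, ← Finset.sum_add_distrib, Finset.sum_mul]
  refine Finset.abs_sum_le_sum_abs _ _ |>.trans (Finset.sum_le_sum fun j _ => ?_)
  obtain ⟨hτ0, hτT⟩ := hτ j
  obtain ⟨hσ0, hσT⟩ := hσ j
  have hyt : |y t| ≤ W := hy t ⟨by linarith, le_rfl⟩
  have hyτ : |y (t - τ j t)| ≤ W := hy _ ⟨by linarith, by linarith⟩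
  have hyσ : |y (t - σ j t)| ≤ W := hy _ ⟨by linarith, by linarith⟩
  calc |c j * (y (t - τ j t) - y t) - d j * y (t - σ j t)|
      ≤ |c j * (y (t - τ j t) - y t)| + |d j * y (t - σ j t)| := abs_sub _ _
    _ = c j * |y (t - τ j t) - y t| + d j * |y (t - σ j t)| := by
      rw [abs_mul, abs_mul, abs_of_nonneg (hc j), abs_of_nonneg (hd j)]
    _ ≤ c j * (W + W) + d j * W := by
      gcongr
      · exact hc j
      · exact (abs_sub _ _).trans (add_le_add hyτ hyt)
      · exact hd j
    _ = (2 * c j + d j) * W := by ring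

theorem mul_sub_le_abs_mul_sub_abs {z W : ℝ} (hz : |z| ≤ W) (y : ℝ) :
    y * (z - y) ≤ |y| * (W - |y|) :=
  calc y * (z - y) = y * z - |y| * |y| := by rw [abs_mul_abs_self, mul_sub]
    _ ≤ |y| * |z| - |y| * |y| := by rw [← abs_mul y z]; gcongr; exact le_abs_self _
    _ ≤ |y| * W - |y| * |y| := by gcongr
    _ = |y| * (W - |y|) := by ring

theorem abs_mul_abs_sub_le_mul {y z r : ℝ} (hyz : |y - z| ≤ r) : |y| * (|y| - r) ≤ y * z :=
  calc |y| * (|y| - r) ≤ |y| * (|y| - |y - z|) := by gcongr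
    _ = y * y - |y * (y - z)| := by rw [mul_sub, abs_mul_abs_self, abs_mul]
    _ ≤ y * y - y * (y - z) := by gcongr; exact le_abs_self _
    _ = y * z := by ring

namespace IsPerturbedLinearSolution

theorem hasDerivAt (h : IsPerturbedLinearSolution c d τ σ β t₀ T η ε₀ y v) {t : ℝ} (ht : t₀ < t) :
    HasDerivAt y (β t * v t) t :=
  (h.hasDerivWithinAt t ht.le).hasDerivAt (Ici_mem_nhds ht)

theorem abs_velocity_le (h : IsPerturbedLinearSolution c d τ σ β t₀ T η ε₀ y v)
    (hc : ∀ j, 0 ≤ c j) (hd : ∀ j, 0 ≤ d j)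
    (hτ : ∀ j, MapsTo (τ j) (Ici t₀) (Icc 0 T)) (hσ : ∀ j, MapsTo (σ j) (Ici t₀) (Icc 0 T))
    {t W : ℝ} (ht : t₀ ≤ t) (hW : W ∈ Icc 0 ε₀) (hy : ∀ s ∈ Icc (t - T) t, |y s| ≤ W) :
    |v t| ≤ (2 * ∑ j, c j + ∑ j, d j + η) * W := by
  have hlin : |linearFeedback c d τ σ y t| ≤ (2 * ∑ j, c j + ∑ j, d j) * W :=
    abs_linearFeedback_le hc hd (fun j => hτ j ht) (fun j => hσ j ht) hy
  have hrem := h.abs_sub_linearFeedback_le t ht W hW hy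
  linarith [abs_sub_abs_le_abs_sub (v t) (linearFeedback c d τ σ y t)]

theorem abs_sub_le_integral (h : IsPerturbedLinearSolution c d τ σ β t₀ T η ε₀ y v)
    (hc : ∀ j, 0 ≤ c j) (hd : ∀ j, 0 ≤ d j)
    (hτ : ∀ j, MapsTo (τ j) (Ici t₀) (Icc 0 T)) (hσ : ∀ j, MapsTo (σ j) (Ici t₀) (Icc 0 T))
    (hβc : ContinuousOn β (Ici t₀)) (hβ0 : ∀ t ∈ Ici t₀, 0 ≤ β t)
    {u t W : ℝ} (hu : t₀ ≤ u) (hut : u ≤ t) (hW : W ∈ Icc 0 ε₀)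
    (hy : ∀ s ∈ Icc (u - T) t, |y s| ≤ W) :
    |y t - y u| ≤ (2 * ∑ j, c j + ∑ j, d j + η) * W * ∫ s in u..t, β s := by
  have hderiv : ∀ s ∈ Ioo u t, HasDerivAt y (β s * v s) s := fun s hs =>
    h.hasDerivAt (hu.trans_lt hs.1)
  rw [← intervalIntegral.integral_const_mul]
  refine norm_sub_le_integral_of_norm_deriv_le_of_le hut
    (fun s hs => (h.hasDerivWithinAt s (hu.trans hs.1)).continuousWithinAt.mono
      fun r hr => hu.trans hr.1)
    (fun s hs => (hderiv s hs).differentiableAt.differentiableWithinAt)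
    (.of_forall fun s hs => ?_) ?_
  · have hs₀ : t₀ ≤ s := hu.trans hs.1.le
    rw [(hderiv s hs).deriv, norm_eq_abs, abs_mul, abs_of_nonneg (hβ0 s hs₀), mul_comm]
    refine mul_le_mul_of_nonneg_right (h.abs_velocity_le hc hd hτ hσ hs₀ hW fun r hr => ?_)
      (hβ0 s hs₀)
    exact hy r ⟨by linarith [hr.1, hs.1], hr.2.trans hs.2.le⟩
  · have hβut : ContinuousOn β (Icc u t) := hβc.mono fun s hs => hu.trans hs.1
    exact (continuousOn_const.mul hβut).intervalIntegrable_of_Icc hut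

theorem mul_velocity_le (h : IsPerturbedLinearSolution c d τ σ β t₀ T η ε₀ y v)
    (hc : ∀ j, 0 ≤ c j) (hd : ∀ j, 0 ≤ d j) (hη : 0 ≤ η) (hT : 0 ≤ T)
    (hτ : ∀ j, MapsTo (τ j) (Ici t₀) (Icc 0 T)) (hσ : ∀ j, MapsTo (σ j) (Ici t₀) (Icc 0 T))
    (hβc : ContinuousOn β (Ici t₀)) (hβ0 : ∀ t ∈ Ici t₀, 0 ≤ β t)
    {t W ζ : ℝ} (ht : t₀ + T ≤ t) (hζ : ∀ j, ∫ s in (t - σ j t)..t, β s ≤ ζ)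
    (hW : W ∈ Icc 0 ε₀) (hy : ∀ s ∈ Icc (t - 2 * T) t, |y s| ≤ W) :
    y t * v t ≤ |y t| * ((∑ j, c j) * (W - |y t|) + η * W
      - (∑ j, d j) * (|y t| - (2 * ∑ j, c j + ∑ j, d j + η) * W * ζ)) := by
  have ht₀ : t ∈ Ici t₀ := by rw [mem_Ici]; linarith
  set L := 2 * ∑ j, c j + ∑ j, d j + η
  have hLW : 0 ≤ L * W := mul_nonneg
    (by linarith [Finset.sum_nonneg fun j (_ : j ∈ Finset.univ) => hc j,
      Finset.sum_nonneg fun j (_ : j ∈ Finset.univ) => hd j]) hW.1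
  have hcterm (j : ι) : y t * (y (t - τ j t) - y t) ≤ |y t| * (W - |y t|) := by
    obtain ⟨hτ0, hτT⟩ := hτ j ht₀
    exact mul_sub_le_abs_mul_sub_abs (hy _ ⟨by linarith, by linarith⟩) (y t)
  have hdterm (j : ι) : |y t| * (|y t| - L * W * ζ) ≤ y t * y (t - σ j t) := by
    obtain ⟨hσ0, hσT⟩ := hσ j ht₀
    refine abs_mul_abs_sub_le_mul ((h.abs_sub_le_integral hc hd hτ hσ hβc hβ0 (by linarith)
      (by linarith) hW fun s hs => hy s ⟨by linarith [hs.1], hs.2⟩).trans ?_)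
    exact mul_le_mul_of_nonneg_left (hζ j) hLW
  have hlin : y t * linearFeedback c d τ σ y t ≤
      |y t| * ((∑ j, c j) * (W - |y t|) - (∑ j, d j) * (|y t| - L * W * ζ)) := by
    rw [linearFeedback, Finset.mul_sum, Finset.sum_mul, Finset.sum_mul, ← Finset.sum_sub_distrib,
      Finset.mul_sum]
    refine Finset.sum_le_sum fun j _ => ?_
    linarith [mul_le_mul_of_nonneg_left (hcterm j) (hc j),
      mul_le_mul_of_nonneg_left (hdterm j) (hd j)]
  have hrem : y t * (v t - linearFeedback c d τ σ y t) ≤ |y t| * (η * W) := by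
    refine (le_abs_self _).trans ?_
    rw [abs_mul]
    gcongr
    exact h.abs_sub_linearFeedback_le t ht₀ W hW fun s hs => hy s ⟨by linarith [hs.1], hs.2⟩
  linarith

theorem abs_lt_of_growth (h : IsPerturbedLinearSolution c d τ σ β t₀ T η ε₀ y v)
    (hc : ∀ j, 0 ≤ c j) (hd : ∀ j, 0 ≤ d j) (hT : 0 ≤ T)
    (hτ : ∀ j, MapsTo (τ j) (Ici t₀) (Icc 0 T)) (hσ : ∀ j, MapsTo (σ j) (Ici t₀) (Icc 0 T))
    {t₁ B μ S : ℝ} (hβ : MapsTo β (Icc t₀ t₁) (Icc 0 B)) (hμ0 : 0 ≤ μ)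
    (hμ : B * (2 * ∑ j, c j + ∑ j, d j + η) < μ) (hS : S * exp (μ * (t₁ - t₀)) ≤ ε₀)
    (hinit : ∀ s ∈ Icc (t₀ - T) t₀, |y s| < S) :
    ∀ t ∈ Icc t₀ t₁, |y t| < S * exp (μ * (t - t₀)) := by
  have hinit₀ : |y t₀| < S := hinit t₀ ⟨by linarith, le_rfl⟩
  have hS0 : 0 < S := (abs_nonneg _).trans_lt hinit₀
  refine abs_lt_mul_exp_of_mul_deriv_lt
    (h.continuousOn.mono fun s hs => (sub_le_self t₀ hT).trans hs.1)
    (fun t ht => h.hasDerivAt ht.1) hinit₀ fun t ht hbelow heq => ?_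
  have hH : 0 < |y t| := heq ▸ by positivity
  have hhist : ∀ s ∈ Icc (t - T) t, |y s| ≤ |y t| := by
    intro s hs
    rw [heq]
    rcases le_total t₀ s with hs₀ | hs₀
    · refine (hbelow s ⟨hs₀, hs.2⟩).trans ?_
      gcongr
      exact hs.2
    · refine (hinit s ⟨by linarith [hs.1, ht.1], hs₀⟩).le.trans (le_mul_of_one_le_right hS0.le ?_)
      exact one_le_exp (mul_nonneg hμ0 (sub_nonneg.2 ht.1.le))
  have hHε : |y t| ≤ ε₀ := by
    rw [heq]
    refine le_trans ?_ hS
    gcongr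
    exact ht.2
  have hv := h.abs_velocity_le hc hd hτ hσ ht.1.le ⟨hH.le, hHε⟩ hhist
  obtain ⟨hβ0, hβB⟩ := hβ ⟨ht.1.le, ht.2⟩
  calc y t * (β t * v t) ≤ |y t * (β t * v t)| := le_abs_self _
    _ = |y t| * (β t * |v t|) := by rw [abs_mul, abs_mul, abs_of_nonneg hβ0]
    _ ≤ |y t| * (B * ((2 * ∑ j, c j + ∑ j, d j + η) * |y t|)) := by
        gcongr
        exact hβ0.trans hβB
    _ = B * (2 * ∑ j, c j + ∑ j, d j + η) * |y t| ^ 2 := by ring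
    _ < μ * |y t| ^ 2 := by gcongr

theorem abs_lt_of_decay (h : IsPerturbedLinearSolution c d τ σ β t₀ T η ε₀ y v)
    (hc : ∀ j, 0 ≤ c j) (hd : ∀ j, 0 ≤ d j) (hη : 0 ≤ η) (hT : 0 ≤ T)
    (hτ : ∀ j, MapsTo (τ j) (Ici t₀) (Icc 0 T)) (hσ : ∀ j, MapsTo (σ j) (Ici t₀) (Icc 0 T))
    (hβc : ContinuousOn β (Ici t₀)) {b : ℝ} (hb : 0 < b) (hβb : ∀ t ∈ Ici t₀, b ≤ β t)
    {t₁ ζ lam A : ℝ} (ht₁ : t₀ + T ≤ t₁)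
    (hζ : ∀ t ∈ Ici t₁, ∀ j, ∫ s in (t - σ j t)..t, β s ≤ ζ) (hlam : 0 < lam)
    (hrate : (∑ j, c j) * (exp (2 * lam * T) - 1) + η * exp (2 * lam * T)
      - (∑ j, d j) * (1 - (2 * ∑ j, c j + ∑ j, d j + η) * exp (2 * lam * T) * ζ) + lam / b < 0)
    (hA : A * exp (2 * lam * T) ≤ ε₀) (hinit : ∀ s ∈ Icc (t₀ - T) t₁, |y s| < A) :
    ∀ t ∈ Ici t₁, |y t| < A * exp (-lam * (t - t₁)) := by
  intro t' ht'
  have hinit₁ : |y t₁| < A := hinit t₁ ⟨by linarith, le_rfl⟩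
  have hA0 : 0 < A := (abs_nonneg _).trans_lt hinit₁
  refine abs_lt_mul_exp_of_mul_deriv_lt
    (h.continuousOn.mono fun s hs => mem_Ici.2 (by linarith [hs.1]))
    (fun t ht => h.hasDerivAt (by linarith [ht.1])) hinit₁ (fun t ht hbelow heq => ?_)
    t' (right_mem_Icc.2 ht')
  have ht₀ : t ∈ Ici t₀ := mem_Ici.2 (by linarith [ht.1])
  have hH : 0 < |y t| := heq ▸ by positivity
  set q := exp (2 * lam * T)
  have hhist : ∀ s ∈ Icc (t - 2 * T) t, |y s| ≤ q * |y t| := by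
    intro s hs
    have hys : |y s| ≤ A * exp (-lam * (s - t₁)) := by
      rcases le_total s t₁ with hs₁ | hs₁
      · refine (hinit s ⟨by linarith [hs.1, ht.1], hs₁⟩).le.trans ?_
        exact le_mul_of_one_le_right hA0.le (one_le_exp (by nlinarith))
      · exact hbelow s ⟨hs₁, hs.2⟩
    calc |y s| ≤ A * exp (-lam * (s - t₁)) := hys
      _ ≤ A * exp (2 * lam * T + -lam * (t - t₁)) := by
          gcongr
          nlinarith [hs.1]
      _ = q * |y t| := by rw [heq, exp_add]; ring
  have hqε : q * |y t| ≤ ε₀ := by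
    refine le_trans ?_ hA
    rw [mul_comm, heq]
    gcongr
    exact mul_le_of_le_one_right hA0.le (exp_le_one_iff.2 (by nlinarith [ht.1]))
  have hvel : y t * v t < -(lam / b) * |y t| ^ 2 := by
    have hle := h.mul_velocity_le hc hd hη hT hτ hσ hβc (fun s hs => hb.le.trans (hβb s hs))
      (by linarith [ht.1]) (hζ t ht.1.le) ⟨by positivity, hqε⟩ hhist
    linarith [mul_lt_mul_of_pos_right hrate (sq_pos_of_pos hH)]
  have hneg : -(lam / b) * |y t| ^ 2 ≤ 0 :=
    mul_nonpos_of_nonpos_of_nonneg (neg_nonpos.2 (by positivity)) (sq_nonneg _)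
  calc y t * (β t * v t) = β t * (y t * v t) := by ring
    _ ≤ b * (y t * v t) := mul_le_mul_of_nonpos_right (hβb t ht₀) (hvel.le.trans hneg)
    _ < b * (-(lam / b) * |y t| ^ 2) := by gcongr
    _ = -lam * |y t| ^ 2 := by field_simp

theorem abs_le_of_growth_of_decay (h : IsPerturbedLinearSolution c d τ σ β t₀ T η ε₀ y v)
    (hc : ∀ j, 0 ≤ c j) (hd : ∀ j, 0 ≤ d j) (hη : 0 ≤ η) (hT : 0 ≤ T)
    (hτ : ∀ j, MapsTo (τ j) (Ici t₀) (Icc 0 T)) (hσ : ∀ j, MapsTo (σ j) (Ici t₀) (Icc 0 T))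
    (hβc : ContinuousOn β (Ici t₀)) {b : ℝ} (hb : 0 < b) (hβb : ∀ t ∈ Ici t₀, b ≤ β t)
    {t₁ B μ ζ lam S : ℝ} (ht₁ : t₀ + T ≤ t₁) (hβB : ∀ t ∈ Icc t₀ t₁, β t ≤ B) (hμ0 : 0 ≤ μ)
    (hμ : B * (2 * ∑ j, c j + ∑ j, d j + η) < μ)
    (hζ : ∀ t ∈ Ici t₁, ∀ j, ∫ s in (t - σ j t)..t, β s ≤ ζ) (hlam : 0 < lam)
    (hrate : (∑ j, c j) * (exp (2 * lam * T) - 1) + η * exp (2 * lam * T)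
      - (∑ j, d j) * (1 - (2 * ∑ j, c j + ∑ j, d j + η) * exp (2 * lam * T) * ζ) + lam / b < 0)
    (hS : S * (exp (μ * (t₁ - t₀)) * exp (2 * lam * T)) < ε₀)
    (hinit : ∀ s ∈ Icc (t₀ - T) t₀, |y s| ≤ S) :
    ∀ t ∈ Ici t₀, |y t| ≤
      exp (μ * (t₁ - t₀)) * exp (lam * (t₁ - t₀)) * exp (-lam * (t - t₀)) * S := by
  intro t ht
  set G := exp (μ * (t₁ - t₀)) with hG
  set q := exp (2 * lam * T)
  have hG1 : 1 ≤ G := one_le_exp (mul_nonneg hμ0 (by linarith))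
  have hq1 : 1 ≤ q := one_le_exp (by positivity)
  have hshift (s : ℝ) : exp (-lam * (s - t₁)) = exp (lam * (t₁ - t₀)) * exp (-lam * (s - t₀)) := by
    rw [← exp_add]; ring_nf
  have hstrict : ∀ S' ∈ Ioo S (ε₀ / (G * q)),
      |y t| ≤ G * exp (lam * (t₁ - t₀)) * exp (-lam * (t - t₀)) * S' := by
    rintro S' ⟨hSS', hS'⟩
    have hinit' : ∀ s ∈ Icc (t₀ - T) t₀, |y s| < S' := fun s hs => (hinit s hs).trans_lt hSS'
    have hS'0 : 0 < S' := (abs_nonneg _).trans_lt (hinit' t₀ ⟨by linarith, le_rfl⟩)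
    have hGq : S' * G * q < ε₀ := by
      rw [mul_assoc]; exact (lt_div_iff₀ (by positivity)).1 hS'
    have hgrowth := h.abs_lt_of_growth hc hd hT hτ hσ
      (fun s hs => ⟨hb.le.trans (hβb s hs.1), hβB s hs⟩) hμ0 hμ
      ((le_mul_of_one_le_right (by positivity) hq1).trans hGq.le) hinit'
    have hbefore : ∀ s ∈ Icc (t₀ - T) t₁, |y s| < S' * G := by
      intro s hs
      rcases le_total t₀ s with hs₀ | hs₀
      · refine (hgrowth s ⟨hs₀, hs.2⟩).trans_le ?_
        rw [hG]
        gcongr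
        exact hs.2
      · exact (hinit' s ⟨hs.1, hs₀⟩).trans_le (le_mul_of_one_le_right hS'0.le hG1)
    have hbound : |y t| ≤ S' * G * exp (-lam * (t - t₁)) := by
      rcases le_total t t₁ with htt₁ | htt₁
      · refine (hbefore t ⟨(sub_le_self t₀ hT).trans ht, htt₁⟩).le.trans ?_
        exact le_mul_of_one_le_right (by positivity) (one_le_exp (by nlinarith))
      · exact (h.abs_lt_of_decay hc hd hη hT hτ hσ hβc hb hβb ht₁ hζ hlam hrate hGq.le hbefore t
          htt₁).le
    exact hbound.trans_eq (by rw [hshift]; ring)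
  have hIoo : ∀ᶠ S' in 𝓝[>] S, S' ∈ Ioo S (ε₀ / (G * q)) :=
    Ioo_mem_nhdsGT ((lt_div_iff₀ (by positivity)).2 hS)
  refine ge_of_tendsto (Tendsto.mono_left ?_ nhdsWithin_le_nhds) (hIoo.mono hstrict)
  exact (continuous_const_mul _).tendsto S

end IsPerturbedLinearSolution

theorem exists_decay_rate (b T : ℝ) {C D ζ : ℝ} (hD : 0 < D) (hζ : (2 * C + D) * ζ < 1) :
    ∃ κ > 0, C * (exp (2 * κ * T) - 1) + κ * exp (2 * κ * T)
      - D * (1 - (2 * C + D + κ) * exp (2 * κ * T) * ζ) + κ / b < 0 := by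
  set f : ℝ → ℝ := fun κ => C * (exp (2 * κ * T) - 1) + κ * exp (2 * κ * T)
    - D * (1 - (2 * C + D + κ) * exp (2 * κ * T) * ζ) + κ / b with hf
  have hcont : Continuous f := by fun_prop
  have hf0 : f 0 < 0 := by
    simp only [hf, mul_zero, zero_mul, exp_zero, sub_self, add_zero, mul_one, zero_div, zero_sub]
    exact neg_lt_zero.2 (mul_pos hD (sub_pos.2 hζ))
  have hsmall : ∀ᶠ κ in 𝓝[>] 0, f κ < 0 :=
    (hcont.tendsto 0).eventually_lt_const hf0 |>.filter_mono nhdsWithin_le_nhds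
  obtain ⟨κ, hfκ, hκ⟩ := (hsmall.and self_mem_nhdsWithin).exists
  exact ⟨κ, hκ, hfκ⟩

theorem exists_exp_bound_of_isPerturbedLinearSolution
    (hc : ∀ j, 0 ≤ c j) (hd : ∀ j, 0 ≤ d j) (hD : 0 < ∑ j, d j) (hT : 0 ≤ T)
    (hτ : ∀ j, MapsTo (τ j) (Ici t₀) (Icc 0 T)) (hσ : ∀ j, MapsTo (σ j) (Ici t₀) (Icc 0 T))
    (hβc : ContinuousOn β (Ici t₀)) {b : ℝ} (hb : 0 < b) (hβb : ∀ t ∈ Ici t₀, b ≤ β t)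
    {ζ : ℝ} (hζ : ∀ᶠ t in atTop, ∀ j, ∫ s in (t - σ j t)..t, β s ≤ ζ)
    (hζlt : (2 * ∑ j, c j + ∑ j, d j) * ζ < 1) :
    ∃ η > 0, ∀ ε₀ > 0, ∃ ε > 0, ∃ M ≥ (1 : ℝ), ∃ lam > 0, ∀ y v : ℝ → ℝ,
      IsPerturbedLinearSolution c d τ σ β t₀ T η ε₀ y v → ∀ S ≤ ε,
      (∀ s ∈ Icc (t₀ - T) t₀, |y s| ≤ S) →
      ∀ t ∈ Ici t₀, |y t| ≤ M * exp (-lam * (t - t₀)) * S := by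
  obtain ⟨κ, hκ, hrate⟩ := exists_decay_rate b T hD hζlt
  obtain ⟨t₂, ht₂⟩ := eventually_atTop.1 hζ
  set t₁ := max (t₀ + T) t₂
  have ht₁ : t₀ + T ≤ t₁ := le_max_left _ _
  have ht₀₁ : t₀ ≤ t₁ := by linarith
  obtain ⟨B, hB⟩ := (isCompact_Icc (a := t₀) (b := t₁)).bddAbove_image
    (hβc.mono Icc_subset_Ici_self)
  have hβB : ∀ t ∈ Icc t₀ t₁, β t ≤ B := fun t ht => hB (mem_image_of_mem β ht)
  have hB0 : 0 ≤ B := hb.le.trans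
    ((hβb t₀ self_mem_Ici).trans (hβB t₀ (left_mem_Icc.2 ht₀₁)))
  have hC : 0 ≤ ∑ j, c j := Finset.sum_nonneg fun j _ => hc j
  set μ := B * (2 * ∑ j, c j + ∑ j, d j + κ) + 1
  have hμ0 : 0 ≤ μ := by positivity
  refine ⟨κ, hκ, fun ε₀ hε₀ => ⟨ε₀ / (2 * (exp (μ * (t₁ - t₀)) * exp (2 * κ * T))), by positivity,
    exp (μ * (t₁ - t₀)) * exp (κ * (t₁ - t₀)), ?_, κ, hκ, fun y v h S hS hinit => ?_⟩⟩
  · exact one_le_mul_of_one_le_of_one_le (one_le_exp (mul_nonneg hμ0 (sub_nonneg.2 ht₀₁)))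
      (one_le_exp (mul_nonneg hκ.le (sub_nonneg.2 ht₀₁)))
  · refine h.abs_le_of_growth_of_decay hc hd hκ.le hT hτ hσ hβc hb hβb ht₁ hβB hμ0 (lt_add_one _)
      (fun t ht => ht₂ t ((le_max_right _ _).trans ht)) hκ hrate ?_ hinit
    calc S * (exp (μ * (t₁ - t₀)) * exp (2 * κ * T)) ≤ ε₀ / 2 := by
          rw [← le_div_iff₀ (by positivity), div_div]; exact hS
      _ < ε₀ := half_lt_self hε₀

end LinearEquation

section Nicholson

variable {ι : Type*} [Fintype ι]

/-- The birth term `∑ j, p j * u j * exp (-a j * v j)` of the Nicholson equation, as a function of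
the vectors `u` and `v` of the two kinds of delayed values. -/
noncomputable def nicholsonBirth (p a u v : ι → ℝ) : ℝ :=
  ∑ j, p j * u j * exp (-(a j) * v j)

theorem nicholsonBirth_const (p a : ι → ℝ) (K : ℝ) :
    nicholsonBirth p a (fun _ => K) (fun _ => K) = (∑ j, p j * exp (-(a j) * K)) * K := by
  rw [nicholsonBirth, Finset.sum_mul]
  exact Finset.sum_congr rfl fun j _ => by ring

theorem hasFDerivAt_nicholsonBirth_const (p a : ι → ℝ) (K : ℝ) :
    HasFDerivAt (fun z : (ι → ℝ) × (ι → ℝ) => nicholsonBirth p a z.1 z.2)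
      (∑ j, ((p j * exp (-(a j) * K)) •
          (ContinuousLinearMap.proj j ∘L ContinuousLinearMap.fst ℝ (ι → ℝ) (ι → ℝ))
        - (K * (p j * a j * exp (-(a j) * K))) •
          (ContinuousLinearMap.proj j ∘L ContinuousLinearMap.snd ℝ (ι → ℝ) (ι → ℝ))))
      (fun _ => K, fun _ => K) := by
  refine HasFDerivAt.fun_sum fun j _ => ?_
  let πu := ContinuousLinearMap.proj (R := ℝ) (φ := fun _ : ι => ℝ) j ∘L
    ContinuousLinearMap.fst ℝ (ι → ℝ) (ι → ℝ)
  let πv := ContinuousLinearMap.proj (R := ℝ) (φ := fun _ : ι => ℝ) j ∘L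
    ContinuousLinearMap.snd ℝ (ι → ℝ) (ι → ℝ)
  have hu : HasFDerivAt (fun z : (ι → ℝ) × (ι → ℝ) => z.1 j) πu (fun _ => K, fun _ => K) :=
    πu.hasFDerivAt
  have hv : HasFDerivAt (fun z : (ι → ℝ) × (ι → ℝ) => z.2 j) πv (fun _ => K, fun _ => K) :=
    πv.hasFDerivAt
  refine ((hu.const_mul (p j)).fun_mul (hv.const_mul (-(a j))).exp).congr_fderiv ?_
  module

theorem exists_abs_nicholsonBirth_sub_le (p a : ι → ℝ) (K : ℝ) {η : ℝ} (hη : 0 < η) :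
    ∃ ε₀ > 0, ∀ W ∈ Icc 0 ε₀, ∀ u v : ι → ℝ, (∀ j, |u j - K| ≤ W) → (∀ j, |v j - K| ≤ W) →
      |nicholsonBirth p a u v - (∑ j, p j * exp (-(a j) * K)) * K
        - ∑ j, (p j * exp (-(a j) * K) * (u j - K)
          - K * (p j * a j * exp (-(a j) * K)) * (v j - K))| ≤ η * W := by
  obtain ⟨ε₀, hε₀, hball⟩ := Metric.nhds_basis_closedBall.eventually_iff.1
    ((hasFDerivAt_nicholsonBirth_const p a K).isLittleO.def hη)
  refine ⟨ε₀, hε₀, fun W hW u v hu hv => ?_⟩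
  have hnorm : ‖((u, v) : (ι → ℝ) × (ι → ℝ)) - (fun _ => K, fun _ => K)‖ ≤ W :=
    max_le ((pi_norm_le_iff_of_nonneg hW.1).2 hu) ((pi_norm_le_iff_of_nonneg hW.1).2 hv)
  have hle := (hball (mem_closedBall_iff_norm.2 (hnorm.trans hW.2))).trans
    (mul_le_mul_of_nonneg_left hnorm hη.le)
  simpa [nicholsonBirth_const, norm_eq_abs] using hle

namespace NicholsonSolution

variable {m : ℕ} {p a : Fin m → ℝ} {δ t₀ T K : ℝ} {β : ℝ → ℝ} {τ σ : Fin m → ℝ → ℝ} {x : ℝ → ℝ}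

theorem abs_sub_le_sSup (hx : NicholsonSolution m p a δ t₀ T β τ σ x) {s : ℝ}
    (hs : s ∈ Icc (t₀ - T) t₀) : |x s - K| ≤ sSup ((fun s => |x s - K|) '' Icc (t₀ - T) t₀) :=
  le_csSup (isCompact_Icc.bddAbove_image
    ((hx.1.mono Icc_subset_Ici_self).sub continuousOn_const).abs) (mem_image_of_mem _ hs)

theorem isPerturbedLinearSolution (hx : NicholsonSolution m p a δ t₀ T β τ σ x)
    (hK : ∑ j, p j * exp (-(a j) * K) = δ)
    (hτ : ∀ j, MapsTo (τ j) (Ici t₀) (Icc 0 T)) (hσ : ∀ j, MapsTo (σ j) (Ici t₀) (Icc 0 T))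
    {η ε₀ : ℝ} (hbirth : ∀ W ∈ Icc 0 ε₀, ∀ u v : Fin m → ℝ, (∀ j, |u j - K| ≤ W) →
      (∀ j, |v j - K| ≤ W) → |nicholsonBirth p a u v - (∑ j, p j * exp (-(a j) * K)) * K
        - ∑ j, (p j * exp (-(a j) * K) * (u j - K)
          - K * (p j * a j * exp (-(a j) * K)) * (v j - K))| ≤ η * W) :
    IsPerturbedLinearSolution (fun j => p j * exp (-(a j) * K))
      (fun j => K * (p j * a j * exp (-(a j) * K))) τ σ β t₀ T η ε₀ (fun t => x t - K)
      (fun t => nicholsonBirth p a (fun j => x (t - τ j t)) (fun j => x (t - σ j t)) - δ * x t)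
      where
  continuousOn := hx.1.sub continuousOn_const
  hasDerivWithinAt t ht := (hx.2.1 t ht).sub_const K
  abs_sub_linearFeedback_le t ht W hW hy := by
    have hwindow {θ : ℝ} (hθ : θ ∈ Icc 0 T) : |x (t - θ) - K| ≤ W :=
      hy _ ⟨by linarith [hθ.2], by linarith [hθ.1]⟩
    have hfeedback : linearFeedback (fun j => p j * exp (-(a j) * K))
        (fun j => K * (p j * a j * exp (-(a j) * K))) τ σ (fun t => x t - K) t
        = ∑ j, (p j * exp (-(a j) * K) * (x (t - τ j t) - K)
          - K * (p j * a j * exp (-(a j) * K)) * (x (t - σ j t) - K)) - δ * (x t - K) := by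
      rw [linearFeedback, ← hK, Finset.sum_mul, ← Finset.sum_sub_distrib]
      exact Finset.sum_congr rfl fun j _ => by ring
    refine le_of_eq_of_le (congrArg _ ?_) (hbirth W hW _ _ (fun j => hwindow (hτ j ht))
      fun j => hwindow (hσ j ht))
    rw [hfeedback, hK]
    ring

end NicholsonSolution

theorem isBoundedUnder_intervalIntegral_of_le {f θ : ℝ → ℝ} {t₀ T B : ℝ}
    (hf : MapsTo f (Ici t₀) (Icc 0 B)) (hθ : MapsTo θ (Ici t₀) (Icc 0 T)) :
    IsBoundedUnder (· ≤ ·) atTop fun t => ∫ s in (t - θ t)..t, f s := by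
  refine isBoundedUnder_of_eventually_le (a := B * T) ?_
  filter_upwards [eventually_ge_atTop (t₀ + T), eventually_ge_atTop t₀] with t ht ht₀
  obtain ⟨hθ0, hθT⟩ := hθ ht₀
  obtain ⟨hf0, hfB⟩ := hf (self_mem_Ici (a := t₀))
  have hnorm : ∀ s ∈ uIoc (t - θ t) t, ‖f s‖ ≤ B := fun s hs => by
    rw [uIoc_of_le (sub_le_self t hθ0)] at hs
    obtain ⟨hs0, hsB⟩ := hf (mem_Ici.2 (by linarith [hs.1] : t₀ ≤ s))
    rwa [norm_eq_abs, abs_of_nonneg hs0]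
  calc ∫ s in (t - θ t)..t, f s ≤ ‖∫ s in (t - θ t)..t, f s‖ := le_norm_self _
    _ ≤ B * |t - (t - θ t)| := intervalIntegral.norm_integral_le_of_norm_le_const hnorm
    _ = B * θ t := by rw [sub_sub_cancel, abs_of_nonneg hθ0]
    _ ≤ B * T := mul_le_mul_of_nonneg_left hθT (hf0.trans hfB)

theorem sum_mul_mul_exp_le {p a : ι → ℝ} (hp : ∀ j, 0 ≤ p j) {K A : ℝ} (hA : ∀ j, a j ≤ A) :
    ∑ j, p j * a j * exp (-(a j) * K) ≤ A * ∑ j, p j * exp (-(a j) * K) := by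
  rw [Finset.mul_sum]
  refine Finset.sum_le_sum fun j _ => ?_
  calc p j * a j * exp (-(a j) * K) = a j * (p j * exp (-(a j) * K)) := by ring
    _ ≤ A * (p j * exp (-(a j) * K)) :=
      mul_le_mul_of_nonneg_right (hA j) (mul_nonneg (hp j) (exp_pos _).le)

theorem one_div_mul_add_le_one_div_add_sum {p a : ι → ℝ} (hp : ∀ j, 0 ≤ p j) (ha : ∀ j, 0 ≤ a j)
    {δ K A : ℝ} (hδ : 0 < δ) (hK0 : 0 ≤ K) (hK : ∑ j, p j * exp (-(a j) * K) = δ)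
    (hA : ∀ j, a j ≤ A) :
    1 / (δ * (2 + A * K)) ≤ 1 / (2 * δ + K * ∑ j, p j * a j * exp (-(a j) * K)) := by
  have hsum0 : 0 ≤ ∑ j, p j * a j * exp (-(a j) * K) :=
    Finset.sum_nonneg fun j _ => mul_nonneg (mul_nonneg (hp j) (ha j)) (exp_pos _).le
  refine one_div_le_one_div_of_le (by positivity) ?_
  calc 2 * δ + K * ∑ j, p j * a j * exp (-(a j) * K) ≤ 2 * δ + K * (A * δ) := by
        gcongr
        exact hK ▸ sum_mul_mul_exp_le hp hA
    _ = δ * (2 + A * K) := by ring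

theorem nicholson_local_exponential_stability_cor_general {m : ℕ} {p a : Fin m → ℝ}
    (hp : ∀ j, 0 ≤ p j) (ha : ∀ j, 0 ≤ a j) (hpa : ∃ j, 0 < p j * a j) {δ t₀ T : ℝ}
    {β : ℝ → ℝ} {τ σ : Fin m → ℝ → ℝ} (hβc : ContinuousOn β (Ici t₀))
    {b : ℝ} (hb : 0 < b) (hβb : ∀ t ∈ Ici t₀, b ≤ β t)
    (hτ : ∀ j, MapsTo (τ j) (Ici t₀) (Icc 0 T)) (hσ : ∀ j, MapsTo (σ j) (Ici t₀) (Icc 0 T))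
    {K : ℝ} (hK0 : 0 < K) (hK : ∑ j, p j * exp (-(a j) * K) = δ)
    {ζM : ℝ} (hζM : ∀ j, ∀ ζ > ζM, ∀ᶠ t in atTop, ∫ s in (t - σ j t)..t, β s < ζ)
    (hζMlt : ζM < 1 / (2 * δ + K * ∑ j, p j * a j * exp (-(a j) * K))) :
    LocallyExpStable m p a δ t₀ T β τ σ K := by
  obtain ⟨j₀, hj₀⟩ := hpa
  have hT : 0 ≤ T := (hτ j₀ self_mem_Ici).1.trans (hτ j₀ self_mem_Ici).2
  have hc (j : Fin m) : 0 ≤ p j * exp (-(a j) * K) := mul_nonneg (hp j) (exp_pos _).le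
  have hd (j : Fin m) : 0 ≤ K * (p j * a j * exp (-(a j) * K)) :=
    mul_nonneg hK0.le (mul_nonneg (mul_nonneg (hp j) (ha j)) (exp_pos _).le)
  have hD : 0 < ∑ j, K * (p j * a j * exp (-(a j) * K)) :=
    Finset.sum_pos' (fun j _ => hd j)
      ⟨j₀, Finset.mem_univ _, mul_pos hK0 (mul_pos hj₀ (exp_pos _))⟩
  have hδ : 0 ≤ δ := hK ▸ Finset.sum_nonneg fun j _ => hc j
  obtain ⟨ζ, hζMζ, hζlt⟩ := exists_between hζMlt
  rw [Finset.mul_sum, lt_div_iff₀ (by linarith), mul_comm] at hζlt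
  have hζ : ∀ᶠ t in atTop, ∀ j, ∫ s in (t - σ j t)..t, β s ≤ ζ :=
    eventually_all.2 fun j => (hζM j ζ hζMζ).mono fun t ht => ht.le
  obtain ⟨η, hη, hlinear⟩ := exists_exp_bound_of_isPerturbedLinearSolution hc hd hD hT hτ hσ hβc
    hb hβb hζ (by rwa [hK])
  obtain ⟨ε₀, hε₀, hbirth⟩ := exists_abs_nicholsonBirth_sub_le p a K hη
  obtain ⟨ε, hε, M, hM, lam, hlam, hbound⟩ := hlinear ε₀ hε₀
  refine ⟨ε, hε, M, hM, lam, hlam, fun x hx hS => ?_⟩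
  exact hbound _ _ (hx.isPerturbedLinearSolution hK hτ hσ hbirth) _ hS fun s => hx.abs_sub_le_sSup

end Nicholson

end

/- STATEMENT 4 (Corollary 2.1): with ζ_M := max_j limsup_{t→∞} ∫_{t−σ_j(t)}^t β(s) ds
   and a⁺ := max_j a_j, if ζ_M < 1/(2δ + K Σ_j p_j a_j e^{−a_j K}) then K is
   locally exponentially stable; in particular this holds if ζ_M < 1/(δ(2 + a⁺K)). -/
theorem nicholson_local_exponential_stability_cor
    (m : ℕ) (hm : 1 ≤ m) (p a : Fin m → ℝ)
    (hp : ∀ j, 0 < p j) (ha : ∀ j, 0 < a j) (δ : ℝ) (hδ : 0 < δ)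
    (t₀ : ℝ) (β : ℝ → ℝ) (τ σ : Fin m → ℝ → ℝ)
    (hβc : ContinuousOn β (Set.Ici t₀))
    (hτc : ∀ j, ContinuousOn (τ j) (Set.Ici t₀))
    (hσc : ∀ j, ContinuousOn (σ j) (Set.Ici t₀))
    (hτ0 : ∀ j, ∀ t ∈ Set.Ici t₀, 0 ≤ τ j t)
    (hσ0 : ∀ j, ∀ t ∈ Set.Ici t₀, 0 ≤ σ j t)
    (βminus : ℝ) (hβminus : IsGLB (β '' Set.Ici t₀) βminus) (hβmpos : 0 < βminus)
    (hβub : ∃ B, ∀ t ∈ Set.Ici t₀, β t ≤ B)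
    (τbar : ℝ)
    (hτbar : IsLUB ((⋃ j, τ j '' Set.Ici t₀) ∪ ⋃ j, σ j '' Set.Ici t₀) τbar)
    -- p > δ and K is the positive equilibrium
    (hpδ : δ < ∑ j, p j)
    (K : ℝ) (hK0 : 0 < K) (hK : ∑ j, p j * Real.exp (-(a j) * K) = δ)
    -- ζ_M := max_j limsup_{t→∞} ∫_{t−σ_j(t)}^t β(s) ds,  a⁺ := max_j a_j
    (ζM : ℝ)
    (hζM : IsGreatest (Set.range fun j =>
      Filter.limsup (fun t => ∫ s in (t - σ j t)..t, β s) Filter.atTop) ζM)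
    (aplus : ℝ) (haplus : IsGreatest (Set.range a) aplus) :
    (ζM < 1 / (2 * δ + K * ∑ j, p j * a j * Real.exp (-(a j) * K)) →
      LocallyExpStable m p a δ t₀ τbar β τ σ K) ∧
    (ζM < 1 / (δ * (2 + aplus * K)) →
      LocallyExpStable m p a δ t₀ τbar β τ σ K) := by
  obtain ⟨B, hB⟩ := hβub
  have hβb : ∀ t ∈ Set.Ici t₀, βminus ≤ β t := fun t ht => hβminus.1 ⟨t, ht, rfl⟩
  have hτ (j) : Set.MapsTo (τ j) (Set.Ici t₀) (Set.Icc 0 τbar) := fun t ht =>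
    ⟨hτ0 j t ht, hτbar.1 (.inl (Set.mem_iUnion_of_mem j ⟨t, ht, rfl⟩))⟩
  have hσ (j) : Set.MapsTo (σ j) (Set.Ici t₀) (Set.Icc 0 τbar) := fun t ht =>
    ⟨hσ0 j t ht, hτbar.1 (.inr (Set.mem_iUnion_of_mem j ⟨t, ht, rfl⟩))⟩
  have hstable := nicholson_local_exponential_stability_cor_general (fun j => (hp j).le)
    (fun j => (ha j).le) ⟨⟨0, hm⟩, mul_pos (hp _) (ha _)⟩ hβc hβmpos hβb hτ hσ hK0 hK
    fun j ζ hζ => Filter.eventually_lt_of_limsup_lt ((hζM.2 ⟨j, rfl⟩).trans_lt hζ)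
      (isBoundedUnder_intervalIntegral_of_le
        (fun t ht => ⟨hβmpos.le.trans (hβb t ht), hB t ht⟩) (hσ j))
  exact ⟨hstable, fun h => hstable (h.trans_le (one_div_mul_add_le_one_div_add_sum
    (fun j => (hp j).le) (fun j => (ha j).le) hδ hK0.le hK fun j => haplus.2 ⟨j, rfl⟩))⟩
end

section
/- (Theorem 3.1.) Consider the one-pair Nicholson equation x'(t) = β(t)(p x(t−τ(t)) e^{−a x(t−σ(t))} − δ x(t)) with p > δ > 0, a > 0, and set ζ_M := limsup_{t→∞} ∫_{t−σ(t)}^{t} β(s) ds. If (e^{δζ_M} − 1)·log(p/δ) ≤ 1, then the positive equilibrium K = (1/a) log(p/δ) is globally attractive: every solution x with admissible initial data satisfies lim_{t→∞} x(t) = K. -/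
/-- A solution of the one-pair Nicholson equation
`x'(t) = β(t)(p x(t−τ(t)) e^{−a x(t−σ(t))} − δ x(t))`, `t ≥ t₀`,
defined on `[t₀ − τbar, ∞)`, with admissible initial data. -/
def NicholsonSolution1 (p a δ t₀ τbar : ℝ) (β τ σ : ℝ → ℝ) (x : ℝ → ℝ) : Prop :=
  ContinuousOn x (Set.Ici (t₀ - τbar)) ∧
  (∀ t ∈ Set.Ici t₀, HasDerivWithinAt x
      (β t * (p * x (t - τ t) * Real.exp (-a * x (t - σ t)) - δ * x t))
      (Set.Ici t₀) t) ∧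
  (∀ s, t₀ - τbar ≤ s → s < t₀ → 0 ≤ x s) ∧
  0 < x t₀

/-!
The change of time `s = δ ∫ β` turns the equation for `y = a x` into
`y'(s) = y(s - τ(s)) e ^ (K - y(s - σ(s))) - y(s)`, with equilibrium `K = log (p / δ)` and with
`limsup σ = δ ζ_M =: Z`. The solution is bounded above and away from zero: at a running extremum the
lagged value `y(s - σ(s))` lies on the right side of `K`, and `y` changes by at most a constant
factor over a delay window.

Let `S` and `I` be the upper and lower limits of `y`. Along near-stationary times at which
`y → S`, the production term must reach `S`, which forces the lagged value below `K`; since this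
term never exceeds `S e ^ (K - I)` in the limit, integrating over the last delay window yields
`S - K ≤ (e ^ Z - 1) S (e ^ (K - I) - 1)`, and symmetrically
`K - I ≤ (e ^ Z - 1) I (1 - e ^ (K - S))`. If `(e ^ Z - 1) K ≤ 1`, the inequality
`1 / u < 1 / (e ^ u - 1) + 1 / 2` for `u > 0` rules out `I < K < S`, and otherwise the two estimates
give `I = S = K`.
-/

open Set Filter Topology

section Calculus

variable {f f' : ℝ → ℝ} {a c s t K L S T ε : ℝ}

theorem image_le_gronwallBound_of_hasDerivWithinAt (hst : s ≤ t) (hf : ContinuousOn f (Icc s t))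
    (hf' : ∀ u ∈ Ico s t, HasDerivWithinAt f (f' u) (Ici u) u)
    (hbound : ∀ u ∈ Ico s t, f' u ≤ K * f u + ε) : f t ≤ gronwallBound (f s) K ε (t - s) :=
  le_gronwallBound_of_liminf_deriv_right_le hf
    (fun u hu _ hr => (hf' u hu).liminf_right_slope_le hr) le_rfl hbound t (right_mem_Icc.2 hst)

theorem image_le_gronwallBound_of_hasDerivAt (hst : s ≤ t)
    (hf : ∀ u ∈ Icc s t, HasDerivAt f (f' u) u)
    (hbound : ∀ u ∈ Ico s t, f' u ≤ K * f u + ε) : f t ≤ gronwallBound (f s) K ε (t - s) :=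
  image_le_gronwallBound_of_hasDerivWithinAt hst (HasDerivAt.continuousOn hf)
    (fun u hu => (hf u (Ico_subset_Icc_self hu)).hasDerivWithinAt) hbound

theorem pos_of_neg_mul_le_deriv {k : ℝ → ℝ} (hk : ContinuousOn k (Ici a))
    (hf : ∀ t ∈ Ici a, HasDerivWithinAt f (f' t) (Ici a) t) (ha : 0 < f a)
    (hbound : ∀ t ∈ Ici a, (∀ s ∈ Icc a t, 0 ≤ f s) → -(k t * f t) ≤ f' t) (ht : a ≤ t) :
    0 < f t := by
  by_contra! hft
  have hcont : ContinuousOn f (Ici a) := fun s hs => (hf s hs).continuousWithinAt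
  have hcompact : IsCompact (Icc a t ∩ f ⁻¹' Iic 0) :=
    isCompact_Icc.of_isClosed_subset ((hcont.mono Icc_subset_Ici_self).preimage_isClosed_of_isClosed
      isClosed_Icc isClosed_Iic) inter_subset_left
  obtain ⟨u, ⟨⟨hau, hut⟩, hfu⟩, hfirst⟩ := hcompact.exists_isLeast ⟨t, ⟨ht, le_rfl⟩, hft⟩
  have hpos : ∀ s ∈ Ico a u, 0 < f s := fun s hs => by
    by_contra! h
    exact hs.2.not_ge (hfirst ⟨⟨hs.1, hs.2.le.trans hut⟩, h⟩)
  obtain ⟨M, hM⟩ := isCompact_Icc.bddAbove_image (hk.mono (Icc_subset_Ici_self : Icc a u ⊆ Ici a))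
  have hdecay : -f u ≤ gronwallBound (-f a) (-M) 0 (u - a) := by
    refine image_le_gronwallBound_of_hasDerivWithinAt (f := fun s => -f s) hau
      (hcont.mono Icc_subset_Ici_self).neg
      (fun s hs => ((hf s hs.1).mono (Ici_subset_Ici.2 hs.1)).neg) fun s hs => ?_
    have hfs := hbound s hs.1 fun v hv => (hpos v ⟨hv.1, hv.2.trans_lt hs.2⟩).le
    have hks : k s * f s ≤ M * f s :=
      mul_le_mul_of_nonneg_right (hM ⟨s, Ico_subset_Icc_self hs, rfl⟩) (hpos s hs).le
    linarith
  rw [gronwallBound_ε0, neg_mul, neg_le_neg_iff] at hdecay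
  exact (mul_pos ha (Real.exp_pos _)).not_ge (hdecay.trans hfu)

theorem deriv_nonneg_of_isMaxOn_Icc_right {d : ℝ} (hst : s < t) (hf : HasDerivAt f d t)
    (hmax : IsMaxOn f (Icc s t) t) : 0 ≤ d := by
  have hslope := (hasDerivWithinAt_iff_tendsto_slope' self_notMem_Iio).1
    (hf.hasDerivWithinAt (s := Iio t))
  refine ge_of_tendsto hslope ?_
  filter_upwards [Ioo_mem_nhdsLT hst] with u hu
  rw [slope_def_field]
  exact div_nonneg_of_nonpos (sub_nonpos.2 (hmax (Ioo_subset_Icc_self hu))) (sub_nonpos.2 hu.2.le)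

theorem exists_forall_le_max_of_record (hf : ContinuousOn f (Ici a)) (haT : a ≤ T)
    (hrecord : ∀ t, T < t → IsMaxOn f (Icc a t) t → f t ≤ c) :
    ∃ w ∈ Icc a T, ∀ t, a ≤ t → f t ≤ max (f w) c := by
  have hcont (b : ℝ) : ContinuousOn f (Icc a b) := hf.mono Icc_subset_Ici_self
  obtain ⟨w, hw, hwmax⟩ := isCompact_Icc.exists_isMaxOn (nonempty_Icc.2 haT) (hcont T)
  refine ⟨w, hw, fun t ht => ?_⟩
  obtain ⟨m, hm, hmmax⟩ := isCompact_Icc.exists_isMaxOn (nonempty_Icc.2 ht) (hcont t)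
  refine (hmmax (right_mem_Icc.2 ht)).trans ?_
  rcases le_or_gt m T with hmT | hmT
  · exact le_max_of_le_left (hwmax ⟨hm.1, hmT⟩)
  · exact le_max_of_le_right (hrecord m hmT (hmmax.on_subset (Icc_subset_Icc_right hm.2)))

theorem eventually_le_of_deriv_le_neg (hε : 0 < ε) (hf : ∀ᶠ t in atTop, HasDerivAt f (f' t) t)
    (hL : ∀ᶠ t in atTop, L ≤ f t) (hdec : ∀ᶠ t in atTop, c ≤ f t → f' t ≤ -ε) :
    ∀ᶠ t in atTop, f t ≤ c := by
  obtain ⟨T, hT⟩ := eventually_atTop.1 (hf.and (hL.and hdec))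
  obtain ⟨T', hTT', hT'⟩ : ∃ T', T ≤ T' ∧ f T' ≤ c := by
    by_contra! habove
    have hlinear : ∀ t, T ≤ t → f t ≤ f T + -ε * (t - T) := fun t ht => by
      have hbound := image_le_gronwallBound_of_hasDerivAt (K := 0) (ε := -ε) ht
        (fun u hu => (hT u hu.1).1) fun u hu => by simpa using (hT u hu.1).2.2 (habove u hu.1).le
      rwa [gronwallBound_K0] at hbound
    have hlate : T ≤ T + (f T - L + 1) / ε :=
      le_add_of_nonneg_right (div_nonneg (by linarith [(hT T le_rfl).2.1]) hε.le)
    have hlow := ((hT _ hlate).2.1).trans (hlinear _ hlate)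
    rw [add_sub_cancel_left, neg_mul, mul_div_cancel₀ _ hε.ne'] at hlow
    linarith
  filter_upwards [eventually_ge_atTop T'] with t ht
  refine image_le_of_deriv_right_lt_deriv_boundary (f' := f') (B := fun _ => c) (B' := fun _ => 0)
    (HasDerivAt.continuousOn fun u hu => (hT u (hTT'.trans hu.1)).1)
    (fun u hu => (hT u (hTT'.trans hu.1)).1.hasDerivWithinAt) hT' (fun _ => hasDerivAt_const _ _)
    (fun u hu hfu => ?_) (right_mem_Icc.2 ht)
  exact ((hT u (hTT'.trans hu.1)).2.2 hfu.ge).trans_lt (neg_lt_zero.2 hε)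

theorem exists_seq_tendsto_and_neg_lt_deriv (hf : ∀ᶠ t in atTop, HasDerivAt f (f' t) t)
    (hL : ∀ᶠ t in atTop, L ≤ f t) (hle : ∀ c > S, ∀ᶠ t in atTop, f t < c)
    (hge : ∀ c < S, ∃ᶠ t in atTop, c < f t) :
    ∃ u : ℕ → ℝ, Tendsto u atTop atTop ∧ Tendsto (fun n => f (u n)) atTop (𝓝 S) ∧
      ∀ ε > 0, ∀ᶠ n in atTop, -ε < f' (u n) := by
  have hfreq (ε : ℝ) (hε : 0 < ε) : ∃ᶠ t in atTop, S - ε ≤ f t ∧ -ε < f' t := by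
    intro hnot
    refine hge (S - ε) (by linarith) ((eventually_le_of_deriv_le_neg hε hf hL ?_).mono
      fun t => not_lt.2)
    exact hnot.mono fun t ht hct => not_lt.1 fun h => ht ⟨hct, h⟩
  have hε (n : ℕ) : 0 < 1 / ((n : ℝ) + 1) := Nat.one_div_pos_of_nat
  have hstep (n : ℕ) : ∃ t : ℝ, n ≤ t ∧ S - 1 / ((n : ℝ) + 1) ≤ f t ∧ -(1 / ((n : ℝ) + 1)) < f' t :=
    frequently_atTop.1 (hfreq _ (hε n)) n
  choose u hun hSu hf'u using hstep
  have hu : Tendsto u atTop atTop := tendsto_atTop_mono hun tendsto_natCast_atTop_atTop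
  refine ⟨u, hu, tendsto_order.2 ⟨fun c hc => ?_, fun c hc => hu.eventually (hle c hc)⟩,
    fun ε hε => ?_⟩
  · have hlim : Tendsto (fun n : ℕ => S - 1 / ((n : ℝ) + 1)) atTop (𝓝 S) := by
      simpa using tendsto_one_div_add_atTop_nhds_zero_nat.const_sub S
    exact (hlim.eventually_const_lt hc).mono fun n hn => hn.trans_le (hSu n)
  · filter_upwards [tendsto_one_div_add_atTop_nhds_zero_nat.eventually_lt_const hε] with n hn
    exact (neg_lt_neg hn).trans (hf'u n)

end Calculus

section Relaxation

variable {y P σ : ℝ → ℝ} {r L N S Z : ℝ}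

theorem tendsto_sub_of_mem_Icc (hσ : ∀ᶠ t in atTop, σ t ∈ Icc 0 r) :
    Tendsto (fun t => t - σ t) atTop atTop :=
  tendsto_atTop_mono' _ (hσ.mono fun t ht => sub_le_sub_left ht.2 t)
    (tendsto_atTop_add_const_right _ (-r) tendsto_id)

theorem eventually_le_relaxation (hy : ∀ᶠ t in atTop, HasDerivAt y (P t - y t) t)
    (hP : ∀ᶠ t in atTop, P t ≤ N) (hσ : ∀ᶠ t in atTop, σ t ∈ Icc 0 r) :
    ∀ᶠ t in atTop, y t ≤ N + (y (t - σ t) - N) * Real.exp (-σ t) := by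
  obtain ⟨T, hT⟩ := eventually_atTop.1 (hy.and hP)
  filter_upwards [hσ, eventually_ge_atTop (T + r)] with t hσt ht
  have hwindow : ∀ u ∈ Icc (t - σ t) t, T ≤ u := fun u hu => by linarith [hu.1, hσt.2]
  have hgronwall := image_le_gronwallBound_of_hasDerivAt (K := -1) (ε := N)
    (sub_le_self t hσt.1) (fun u hu => (hT u (hwindow u hu)).1)
    (fun u hu => by linarith [(hT u (hwindow u (Ico_subset_Icc_self hu))).2])
  simp only [gronwallBound_of_K_ne_0 (neg_ne_zero.2 one_ne_zero), sub_sub_cancel, neg_one_mul,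
    div_neg, div_one] at hgronwall
  linarith

theorem exists_fluctuation_limits (hy : ∀ᶠ t in atTop, HasDerivAt y (P t - y t) t)
    (hL : ∀ᶠ t in atTop, L ≤ y t) (hle : ∀ c > S, ∀ᶠ t in atTop, y t < c)
    (hge : ∀ c < S, ∃ᶠ t in atTop, c < y t) (hP : ∀ c > N, ∀ᶠ t in atTop, P t ≤ c)
    (hσ0 : ∀ᶠ t in atTop, 0 ≤ σ t) (hσ : ∀ c > Z, ∀ᶠ t in atTop, σ t < c) :
    ∃ (u : ℕ → ℝ) (v : ℝ), Tendsto u atTop atTop ∧ (∀ c < S, ∀ᶠ n in atTop, c ≤ P (u n)) ∧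
      Tendsto (fun n => y (u n - σ (u n))) atTop (𝓝 v) ∧
      ∃ c ∈ Icc 0 (Real.exp Z - 1), S - v ≤ c * (N - S) := by
  obtain ⟨u, hu, huS, hu'⟩ := exists_seq_tendsto_and_neg_lt_deriv hy hL hle hge
  have hσr : ∀ᶠ t in atTop, σ t ∈ Icc 0 (Z + 1) :=
    (hσ0.and (hσ (Z + 1) (lt_add_one Z))).mono fun t ht => ⟨ht.1, ht.2.le⟩
  have hlag := tendsto_sub_of_mem_Icc hσr
  have hmem : ∀ᶠ t in atTop, (y (t - σ t), σ t) ∈ Icc L (S + 1) ×ˢ Icc 0 (Z + 1) := by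
    filter_upwards [hlag.eventually hL, hlag.eventually (hle (S + 1) (lt_add_one S)), hσr]
      with t hLt htS hσt
    exact ⟨⟨hLt, htS.le⟩, hσt⟩
  obtain ⟨⟨v, z⟩, -, φ, hφ, hlim⟩ := (isCompact_Icc.prod isCompact_Icc).tendsto_subseq'
    (hu.eventually hmem).frequently
  have hv := (continuous_fst.tendsto (v, z)).comp hlim
  have hz := (continuous_snd.tendsto (v, z)).comp hlim
  have huφ : Tendsto (u ∘ φ) atTop atTop := hu.comp hφ.tendsto_atTop
  have huSφ : Tendsto (fun n => y (u (φ n))) atTop (𝓝 S) := huS.comp hφ.tendsto_atTop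
  have hz0 : 0 ≤ z := ge_of_tendsto hz (huφ.eventually hσ0)
  have hzZ : z ≤ Z := le_of_forall_gt_imp_ge_of_dense fun c hc =>
    le_of_tendsto hz ((huφ.eventually (hσ c hc)).mono fun _ hn => hn.le)
  refine ⟨u ∘ φ, v, huφ, fun c hc => ?_, hv, Real.exp z - 1,
    ⟨sub_nonneg.2 (Real.one_le_exp hz0), sub_le_sub_right (Real.exp_le_exp.2 hzZ) 1⟩, ?_⟩
  · have hε : 0 < (S - c) / 2 := by linarith
    filter_upwards [hφ.tendsto_atTop.eventually (hu' _ hε),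
      huSφ.eventually_const_lt (sub_lt_self S hε)] with n hn hSn
    simp only [Function.comp_apply]
    linarith
  · have hrelax (c : ℝ) (hc : N < c) : S ≤ c + (v - c) * Real.exp (-z) :=
      le_of_tendsto_of_tendsto huSφ (((hv.sub_const c).mul (hz.neg.rexp)).const_add c)
        (huφ.eventually (eventually_le_relaxation hy (hP c hc) hσr))
    have hlimit : S ≤ N + (v - N) * Real.exp (-z) :=
      ge_of_tendsto (((by fun_prop : Continuous fun c => c + (v - c) * Real.exp (-z)).tendsto
        N).mono_left nhdsWithin_le_nhds) (eventually_mem_nhdsWithin.mono hrelax : ∀ᶠ c in 𝓝[>] N, _)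
    have hexp : Real.exp (-z) * Real.exp z = 1 := by rw [← Real.exp_add]; simp
    linear_combination Real.exp z * hlimit + (v - N) * hexp

theorem le_mul_of_tendsto {p g : ℕ → ℝ} {G : ℝ} (hp : ∀ c < S, ∀ᶠ n in atTop, c ≤ p n)
    (hpg : ∀ c > S, ∀ᶠ n in atTop, p n ≤ c * g n) (hg : Tendsto g atTop (𝓝 G)) : S ≤ S * G := by
  have hlim (c : ℝ) (hc : S < c) : S ≤ c * G := le_of_forall_lt_imp_le_of_dense fun b hb =>
    ge_of_tendsto (hg.const_mul c) (((hp b hb).and (hpg c hc)).mono fun n hn => hn.1.trans hn.2)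
  exact ge_of_tendsto (((continuous_mul_const G).tendsto S).mono_left nhdsWithin_le_nhds)
    (eventually_mem_nhdsWithin.mono hlim : ∀ᶠ c in 𝓝[>] S, _)

end Relaxation

section Contraction

variable {K I S c c' : ℝ}

theorem sub_two_mul_exp_add_add_two_pos {u : ℝ} (hu : 0 < u) :
    0 < (u - 2) * Real.exp u + u + 2 := by
  have hderiv (v : ℝ) : HasDerivAt (fun u : ℝ => (u - 2) * Real.exp u + u + 2)
      ((v - 1) * Real.exp v + 1) v := by
    refine (((((hasDerivAt_id v).sub_const 2).mul (Real.hasDerivAt_exp v)).add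
      (hasDerivAt_id v)).add_const 2).congr_deriv ?_
    simp only [id_eq]
    ring
  have hmono : StrictMonoOn (fun u : ℝ => (u - 2) * Real.exp u + u + 2) (Ici 0) := by
    refine strictMonoOn_of_hasDerivWithinAt_pos (convex_Ici 0)
      (HasDerivAt.continuousOn fun v _ => hderiv v) (fun v _ => (hderiv v).hasDerivWithinAt) ?_
    intro v hv
    rw [interior_Ici] at hv
    have hexp : -v + 1 < Real.exp (-v) := Real.add_one_lt_exp (neg_ne_zero.2 hv.ne')
    have hcancel : Real.exp (-v) * Real.exp v = 1 := by rw [← Real.exp_add]; simp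
    nlinarith [Real.exp_pos v]
  simpa using hmono self_mem_Ici hu.le hu

theorem one_div_lt_one_div_exp_sub_one_add_half {u : ℝ} (hu : 0 < u) :
    1 / u < 1 / (Real.exp u - 1) + 1 / 2 := by
  have hexp : 0 < Real.exp u - 1 := by linarith [Real.add_one_lt_exp hu.ne']
  rw [div_add_div _ _ hexp.ne' two_ne_zero, div_lt_div_iff₀ hu (by positivity)]
  linarith [sub_two_mul_exp_add_add_two_pos hu]

theorem one_div_one_sub_exp_neg {u : ℝ} (hu : 0 < u) :
    1 / (1 - Real.exp (-u)) = 1 + 1 / (Real.exp u - 1) := by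
  have hexp : Real.exp u - 1 ≠ 0 := by linarith [Real.add_one_lt_exp hu.ne']
  have hneg : 1 - Real.exp (-u) = (Real.exp u - 1) / Real.exp u := by
    rw [Real.exp_neg]
    field_simp
  rw [hneg]
  field_simp
  ring

/-- In terms of reciprocals, with `i = K - I` and `s = S - K`, the hypothesis and the negation of
the conclusion read `1 / (e ^ i - 1) ≤ 1 / K + 1 / s` and `1 / K + 1 + 1 / (e ^ s - 1) ≤ 1 / i`;
adding them contradicts `1 / u < 1 / (e ^ u - 1) + 1 / 2` at `u = i` and `u = s`. -/
theorem lt_of_fluctuation_le (hK : 0 < K) (hIK : I < K) (hKS : K < S)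
    (hS : K * (S - K) ≤ S * (Real.exp (K - I) - 1)) :
    I * (1 - Real.exp (K - S)) < K * (K - I) := by
  by_contra! hcon
  have hi : 0 < K - I := sub_pos.2 hIK
  have hs : 0 < S - K := sub_pos.2 hKS
  have hA : 0 < Real.exp (K - I) - 1 := by linarith [Real.add_one_lt_exp hi.ne']
  have hB : 0 < 1 - Real.exp (K - S) := sub_pos.2 (Real.exp_lt_one_iff.2 (sub_neg.2 hKS))
  have hupper : 1 / (Real.exp (K - I) - 1) ≤ 1 / K + 1 / (S - K) := by
    rw [div_add_div _ _ hK.ne' hs.ne', div_le_div_iff₀ hA (by positivity)]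
    linarith
  have hlower : 1 / K + 1 / (1 - Real.exp (K - S)) ≤ 1 / (K - I) := by
    rw [div_add_div _ _ hK.ne' hB.ne', div_le_div_iff₀ (by positivity) hi]
    linarith
  have hBeq := one_div_one_sub_exp_neg hs
  rw [neg_sub] at hBeq
  linarith [one_div_lt_one_div_exp_sub_one_add_half hi, one_div_lt_one_div_exp_sub_one_add_half hs]

theorem eq_of_fluctuation_le (hI : 0 < I) (hIS : I ≤ S)
    (hc : 0 ≤ c) (hcK : c * K ≤ 1) (hc' : 0 ≤ c') (hc'K : c' * K ≤ 1)
    (hS : S - K ≤ c * (S * (Real.exp (K - I) - 1)))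
    (hI' : K - I ≤ c' * (I * (1 - Real.exp (K - S)))) : I = K ∧ S = K := by
  have hS0 : 0 < S := hI.trans_le hIS
  rcases le_or_gt K I with hKI | hIK
  · have hexp : Real.exp (K - I) ≤ 1 := Real.exp_le_one_iff.2 (sub_nonpos.2 hKI)
    have hSK := hS.trans (mul_nonpos_of_nonneg_of_nonpos hc
      (mul_nonpos_of_nonneg_of_nonpos hS0.le (sub_nonpos.2 hexp)))
    constructor <;> linarith
  rcases le_or_gt S K with hSK | hKS
  · have hexp : 1 ≤ Real.exp (K - S) := Real.one_le_exp (sub_nonneg.2 hSK)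
    have hKI := hI'.trans (mul_nonpos_of_nonneg_of_nonpos hc'
      (mul_nonpos_of_nonneg_of_nonpos hI.le (sub_nonpos.2 hexp)))
    constructor <;> linarith
  have hK : 0 < K := hI.trans hIK
  have hA : 0 ≤ S * (Real.exp (K - I) - 1) :=
    mul_nonneg hS0.le (sub_nonneg.2 (Real.one_le_exp (sub_nonneg.2 hIK.le)))
  have hB : 0 ≤ I * (1 - Real.exp (K - S)) :=
    mul_nonneg hI.le (sub_nonneg.2 (Real.exp_le_one_iff.2 (sub_nonpos.2 hKS.le)))
  have hupper : K * (S - K) ≤ S * (Real.exp (K - I) - 1) :=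
    calc K * (S - K) ≤ K * (c * (S * (Real.exp (K - I) - 1))) := by gcongr
      _ = c * K * (S * (Real.exp (K - I) - 1)) := by ring
      _ ≤ S * (Real.exp (K - I) - 1) := mul_le_of_le_one_left hA hcK
  have hlower : K * (K - I) ≤ I * (1 - Real.exp (K - S)) :=
    calc K * (K - I) ≤ K * (c' * (I * (1 - Real.exp (K - S)))) := by gcongr
      _ = c' * K * (I * (1 - Real.exp (K - S))) := by ring
      _ ≤ I * (1 - Real.exp (K - S)) := mul_le_of_le_one_left hB hc'K
  exact absurd hlower (lt_of_fluctuation_le hK hIK hKS hupper).not_ge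

end Contraction

/-- Positive solutions `y` of `y'(t) = y(t - τ(t)) e ^ (K - y(t - σ(t))) - y(t)`, the one-pair
Nicholson equation with unit decay rate and equilibrium `K`. The equation and the bound `r` on both
delays are imposed only for `t > r`, so that lagged times are positive and no history is needed. -/
structure NormalizedNicholson (K r : ℝ) (τ σ y : ℝ → ℝ) : Prop where
  continuousOn : ContinuousOn y (Ici 0)
  pos : ∀ t, 0 ≤ t → 0 < y t
  delay_mem : ∀ t, r < t → τ t ∈ Icc 0 r ∧ σ t ∈ Icc 0 r
  hasDerivAt : ∀ t, r < t →
    HasDerivAt y (y (t - τ t) * Real.exp (K - y (t - σ t)) - y t) t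

namespace NormalizedNicholson

variable {K r s t I S Z : ℝ} {τ σ y : ℝ → ℝ}

theorem delay_bound_nonneg (h : NormalizedNicholson K r τ σ y) : 0 ≤ r :=
  have hτ := (h.delay_mem (r + 1) (lt_add_one r)).1
  hτ.1.trans hτ.2

theorem lag_pos (h : NormalizedNicholson K r τ σ y) (ht : r < t) :
    0 < y (t - τ t) ∧ 0 < y (t - σ t) :=
  have ⟨hτ, hσ⟩ := h.delay_mem t ht
  ⟨h.pos _ (by linarith [hτ.2]), h.pos _ (by linarith [hσ.2])⟩

theorem le_exp_mul (h : NormalizedNicholson K r τ σ y) (hs : r < s) (hst : s ≤ t) :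
    y s ≤ Real.exp (t - s) * y t := by
  have hdecay := image_le_gronwallBound_of_hasDerivAt (f := fun u => -y u) (K := -1) (ε := 0) hst
    (fun u hu => (h.hasDerivAt u (hs.trans_le hu.1)).neg) fun u hu => by
      have hprod := mul_pos (h.lag_pos (hs.trans_le hu.1)).1 (Real.exp_pos (K - y (u - σ u)))
      linarith
  rw [gronwallBound_ε0, neg_one_mul, neg_mul, neg_le_neg_iff, Real.exp_neg] at hdecay
  exact (mul_inv_le_iff₀' (Real.exp_pos _)).1 hdecay

/-- The decay estimate `le_exp_mul` gives `y (u - τ u) ≤ e ^ r * y u`, so that growth is controlled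
by the present value alone. -/
theorem le_mul_exp (h : NormalizedNicholson K r τ σ y) (hs : 2 * r < s) (hst : s ≤ t) :
    y t ≤ y s * Real.exp (Real.exp (r + K) * (t - s)) := by
  have hr := h.delay_bound_nonneg
  rw [← gronwallBound_ε0]
  refine image_le_gronwallBound_of_hasDerivAt hst
    (fun u hu => h.hasDerivAt u (by linarith [hu.1])) fun u hu => ?_
  have hu : 2 * r < u := hs.trans_le hu.1
  have hru : r < u := by linarith
  have hτ := (h.delay_mem u hru).1
  have hy := h.pos u (by linarith)
  have hlag : y (u - τ u) ≤ Real.exp r * y u :=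
    (h.le_exp_mul (by linarith [hτ.2]) (sub_le_self u hτ.1)).trans
      (by rw [sub_sub_cancel]; gcongr; exact hτ.2)
  have hprod : y (u - τ u) * Real.exp (K - y (u - σ u)) ≤ Real.exp r * y u * Real.exp K := by
    gcongr
    exact sub_le_self K (h.lag_pos hru).2.le
  rw [Real.exp_add]
  linarith

theorem lag_le_of_isMaxOn (h : NormalizedNicholson K r τ σ y) (ht : r < t)
    (hmax : IsMaxOn y (Icc 0 t) t) : y (t - σ t) ≤ K := by
  have hr := h.delay_bound_nonneg
  obtain ⟨hτ, -⟩ := h.delay_mem t ht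
  have hderiv := deriv_nonneg_of_isMaxOn_Icc_right (hr.trans_lt ht) (h.hasDerivAt t ht) hmax
  have hlag : y (t - τ t) ≤ y t := hmax ⟨by linarith [hτ.2], sub_le_self t hτ.1⟩
  by_contra! hK
  have hprod := mul_lt_of_lt_one_right (h.lag_pos ht).1 (Real.exp_lt_one_iff.2 (sub_neg.2 hK))
  linarith

theorem le_lag_of_isMinOn (h : NormalizedNicholson K r τ σ y) (ht : r < t)
    (hmin : IsMinOn y (Icc 0 t) t) : K ≤ y (t - σ t) := by
  have hr := h.delay_bound_nonneg
  obtain ⟨hτ, -⟩ := h.delay_mem t ht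
  have hderiv := deriv_nonneg_of_isMaxOn_Icc_right (hr.trans_lt ht) (h.hasDerivAt t ht).neg hmin.neg
  have hlag : y t ≤ y (t - τ t) := hmin ⟨by linarith [hτ.2], sub_le_self t hτ.1⟩
  by_contra! hK
  have hprod := lt_mul_of_one_lt_right (h.lag_pos ht).1 (Real.one_lt_exp_iff.2 (sub_pos.2 hK))
  linarith

theorem exists_forall_le (h : NormalizedNicholson K r τ σ y) (hK : 0 ≤ K) :
    ∃ C, ∀ t, 0 ≤ t → y t ≤ C := by
  have hr := h.delay_bound_nonneg
  obtain ⟨w, -, hw⟩ := exists_forall_le_max_of_record (T := 3 * r)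
    (c := K * Real.exp (Real.exp (r + K) * r)) h.continuousOn (by positivity) fun t ht hmax => by
      have hσ := (h.delay_mem t (by linarith)).2
      calc y t ≤ y (t - σ t) * Real.exp (Real.exp (r + K) * (t - (t - σ t))) :=
            h.le_mul_exp (by linarith [hσ.2]) (sub_le_self t hσ.1)
        _ ≤ K * Real.exp (Real.exp (r + K) * r) := by
            rw [sub_sub_cancel]
            gcongr
            exacts [h.lag_le_of_isMaxOn (by linarith) hmax, hσ.2]
  exact ⟨_, hw⟩

theorem exists_pos_forall_le (h : NormalizedNicholson K r τ σ y) (hK : 0 < K) :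
    ∃ m > 0, ∀ t, 0 ≤ t → m ≤ y t := by
  have hr := h.delay_bound_nonneg
  obtain ⟨w, hw0, hw⟩ := exists_forall_le_max_of_record (T := 2 * r)
    (c := -(Real.exp (-r) * K)) h.continuousOn.neg (by positivity) fun t ht hmax => by
      have hσ := (h.delay_mem t (by linarith)).2
      have hmin : IsMinOn y (Icc 0 t) t := by simpa using hmax.neg
      have hKy : K ≤ Real.exp r * y t :=
        calc K ≤ y (t - σ t) := h.le_lag_of_isMinOn (by linarith) hmin
          _ ≤ Real.exp (t - (t - σ t)) * y t :=
            h.le_exp_mul (by linarith [hσ.2]) (sub_le_self t hσ.1)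
          _ ≤ Real.exp r * y t := by
            rw [sub_sub_cancel]
            gcongr
            exacts [(h.pos t (by linarith)).le, hσ.2]
      rw [Pi.neg_apply, neg_le_neg_iff, Real.exp_neg]
      exact (inv_mul_le_iff₀ (Real.exp_pos r)).2 hKy
  refine ⟨min (y w) (Real.exp (-r) * K), lt_min (h.pos w hw0.1) (by positivity), fun t ht => ?_⟩
  have hle := hw t ht
  rwa [Pi.neg_apply, Pi.neg_apply, max_neg_neg, neg_le_neg_iff] at hle

theorem eventually_delay_mem (h : NormalizedNicholson K r τ σ y) :
    ∀ᶠ t in atTop, τ t ∈ Icc 0 r ∧ σ t ∈ Icc 0 r :=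
  (eventually_gt_atTop r).mono h.delay_mem

theorem tendsto_lag (h : NormalizedNicholson K r τ σ y) :
    Tendsto (fun t => t - τ t) atTop atTop ∧ Tendsto (fun t => t - σ t) atTop atTop :=
  ⟨tendsto_sub_of_mem_Icc (h.eventually_delay_mem.mono fun _ ht => ht.1),
    tendsto_sub_of_mem_Icc (h.eventually_delay_mem.mono fun _ ht => ht.2)⟩

theorem exists_upper_fluctuation_le (h : NormalizedNicholson K r τ σ y) (hS0 : 0 < S)
    (hIy : ∀ c < I, ∀ᶠ t in atTop, c < y t) (hyS : ∀ c > S, ∀ᶠ t in atTop, y t < c)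
    (hSy : ∀ c < S, ∃ᶠ t in atTop, c < y t) (hσ : ∀ c > Z, ∀ᶠ t in atTop, σ t < c) :
    ∃ c ∈ Icc 0 (Real.exp Z - 1), S - K ≤ c * (S * (Real.exp (K - I) - 1)) := by
  obtain ⟨hlagτ, hlagσ⟩ := h.tendsto_lag
  have hP (c : ℝ) (hc : S * Real.exp (K - I) < c) :
      ∀ᶠ t in atTop, y (t - τ t) * Real.exp (K - y (t - σ t)) ≤ c := by
    have hcont : ContinuousAt (fun ε => (S + ε) * Real.exp (K - (I - ε))) 0 := by fun_prop
    obtain ⟨ε, hεc, hε⟩ := (((hcont.eventually_lt_const (by simpa using hc)).filter_mono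
      nhdsWithin_le_nhds).and (eventually_mem_nhdsWithin : ∀ᶠ ε in 𝓝[>] (0 : ℝ), ε ∈ Ioi 0)).exists
    filter_upwards [hlagτ.eventually (hyS (S + ε) (lt_add_of_pos_right S hε)),
      hlagσ.eventually (hIy (I - ε) (sub_lt_self I hε))] with t hτt hσt
    refine le_trans ?_ hεc.le
    have hS := add_pos hS0 hε
    gcongr
  obtain ⟨u, v, hu, hPu, hv, c, hc, hvS⟩ := exists_fluctuation_limits
    ((eventually_gt_atTop r).mono h.hasDerivAt)
    ((hIy (I - 1) (sub_one_lt I)).mono fun _ => le_of_lt) hyS hSy hP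
    (h.eventually_delay_mem.mono fun _ ht => ht.2.1) hσ
  have hSv : S ≤ S * Real.exp (K - v) := le_mul_of_tendsto hPu
    (fun c hc => (hu.eventually (hlagτ.eventually (hyS c hc))).mono fun n hn =>
      mul_le_mul_of_nonneg_right hn.le (Real.exp_pos _).le) (hv.const_sub K).rexp
  have hvK : 0 ≤ K - v := Real.one_le_exp_iff.1 ((le_mul_iff_one_le_right hS0).1 hSv)
  exact ⟨c, hc, by linarith⟩

theorem exists_lower_fluctuation_le (h : NormalizedNicholson K r τ σ y) (hI0 : 0 < I)
    (hIy : ∀ c < I, ∀ᶠ t in atTop, c < y t) (hyI : ∀ c > I, ∃ᶠ t in atTop, y t < c)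
    (hyS : ∀ c > S, ∀ᶠ t in atTop, y t < c) (hσ : ∀ c > Z, ∀ᶠ t in atTop, σ t < c) :
    ∃ c ∈ Icc 0 (Real.exp Z - 1), K - I ≤ c * (I * (1 - Real.exp (K - S))) := by
  obtain ⟨hlagτ, hlagσ⟩ := h.tendsto_lag
  have hP (c : ℝ) (hc : -(I * Real.exp (K - S)) < c) :
      ∀ᶠ t in atTop, -(y (t - τ t) * Real.exp (K - y (t - σ t))) ≤ c := by
    have hcont : ContinuousAt (fun ε => (I - ε) * Real.exp (K - (S + ε))) 0 := by fun_prop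
    obtain ⟨ε, hεc, hε⟩ := (((hcont.eventually_const_lt (by simpa using neg_lt.1 hc)).filter_mono
      nhdsWithin_le_nhds).and (Ioo_mem_nhdsGT hI0)).exists
    filter_upwards [hlagτ.eventually (hIy (I - ε) (sub_lt_self I hε.1)),
      hlagσ.eventually (hyS (S + ε) (lt_add_of_pos_right S hε.1))] with t hτt hσt
    refine neg_le.1 (hεc.le.trans ?_)
    have hI := (sub_pos.2 hε.2).trans hτt
    gcongr
  obtain ⟨u, v, hu, hPu, hv, c, hc, hvI⟩ := exists_fluctuation_limits (y := fun t => -y t) (S := -I)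
    (P := fun t => -(y (t - τ t) * Real.exp (K - y (t - σ t)))) (L := -(S + 1))
    ((eventually_gt_atTop r).mono fun t ht => (h.hasDerivAt t ht).neg.congr_deriv (by ring))
    ((hyS (S + 1) (lt_add_one S)).mono fun _ ht => neg_le_neg ht.le)
    (fun c hc => (hIy (-c) (neg_lt.1 hc)).mono fun _ ht => neg_lt.1 ht)
    (fun c hc => (hyI (-c) (lt_neg.1 hc)).mono fun _ ht => lt_neg.1 ht)
    hP (h.eventually_delay_mem.mono fun _ ht => ht.2.1) hσ
  have hIv : -I ≤ -I * Real.exp (K - -v) := le_mul_of_tendsto hPu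
    (fun c hc => (hu.eventually (hlagτ.eventually (hIy (-c) (neg_lt.1 hc)))).mono fun n hn => by
      rw [neg_le, ← neg_mul]
      exact mul_le_mul_of_nonneg_right hn.le (Real.exp_pos _).le)
    (by simpa using (hv.neg.const_sub K).rexp)
  have hvK : K - -v ≤ 0 := Real.exp_le_one_iff.1 ((mul_le_iff_le_one_right hI0).1 (by linarith))
  exact ⟨c, hc, by linarith⟩

theorem tendsto_nhds (h : NormalizedNicholson K r τ σ y) (hK : 0 < K)
    (hσ : ∀ c > Z, ∀ᶠ t in atTop, σ t < c) (hZ : (Real.exp Z - 1) * K ≤ 1) :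
    Tendsto y atTop (𝓝 K) := by
  obtain ⟨C, hC⟩ := h.exists_forall_le hK.le
  obtain ⟨m, hm, hmy⟩ := h.exists_pos_forall_le hK
  have hle : ∀ᶠ t in atTop, y t ≤ C := (eventually_ge_atTop 0).mono hC
  have hge : ∀ᶠ t in atTop, m ≤ y t := (eventually_ge_atTop 0).mono hmy
  have hbdd : IsBoundedUnder (· ≤ ·) atTop y := ⟨C, eventually_map.2 hle⟩
  have hbdd' : IsBoundedUnder (· ≥ ·) atTop y := ⟨m, eventually_map.2 hge⟩
  have hIS : liminf y atTop ≤ limsup y atTop := liminf_le_limsup hbdd hbdd'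
  have hI0 : 0 < liminf y atTop := hm.trans_le (le_liminf_of_le hbdd.isCoboundedUnder_ge hge)
  have hIy (c : ℝ) (hc : c < liminf y atTop) := eventually_lt_of_lt_liminf hc hbdd'
  have hyS (c : ℝ) (hc : limsup y atTop < c) := eventually_lt_of_limsup_lt hc hbdd
  obtain ⟨c, hc, hupper⟩ := h.exists_upper_fluctuation_le (hI0.trans_le hIS) hIy hyS
    (fun c hc => frequently_lt_of_lt_limsup hbdd'.isCoboundedUnder_le hc) hσ
  obtain ⟨c', hc', hlower⟩ := h.exists_lower_fluctuation_le hI0 hIy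
    (fun c hc => frequently_lt_of_liminf_lt hbdd.isCoboundedUnder_ge hc) hyS hσ
  have hcK {c : ℝ} (hc : c ∈ Icc 0 (Real.exp Z - 1)) : c * K ≤ 1 :=
    (mul_le_mul_of_nonneg_right hc.2 hK.le).trans hZ
  obtain ⟨hI, hS⟩ := eq_of_fluctuation_le hI0 hIS hc.1 (hcK hc) hc'.1 (hcK hc') hupper hlower
  exact tendsto_of_liminf_eq_limsup hI hS hbdd hbdd'

end NormalizedNicholson

section Clock

variable {b : ℝ → ℝ} {t₀ : ℝ}

/-- To the left of `t₀`, where `b` is arbitrary, `e` is the primitive of the constant `b t₀`. -/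
theorem exists_orderIso_eq_integral (hb : ContinuousOn b (Ici t₀)) (hpos : ∀ t ∈ Ici t₀, 0 < b t)
    (hdiv : Tendsto (fun t => ∫ s in t₀..t, b s) atTop atTop) :
    ∃ e : ℝ ≃o ℝ, (∀ t ∈ Ici t₀, e t = ∫ s in t₀..t, b s) ∧
      ∀ t ∈ Ioi t₀, HasDerivAt e (b t) t := by
  have hmax (t : ℝ) : max t₀ t ∈ Ici t₀ := le_max_left t₀ t
  have hcont : Continuous fun s => b (max t₀ s) := hb.comp_continuous (by fun_prop) hmax
  have hderiv (t : ℝ) : HasDerivAt (fun t => ∫ s in t₀..t, b (max t₀ s)) (b (max t₀ t)) t :=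
    (hcont.integral_hasStrictDerivAt t₀ t).hasDerivAt
  have heq : EqOn (fun t => ∫ s in t₀..t, b (max t₀ s)) (fun t => ∫ s in t₀..t, b s) (Ici t₀) :=
    fun t ht => intervalIntegral.integral_congr fun s hs => by
      rw [uIcc_of_le ht] at hs
      simp only [max_eq_right hs.1]
  have hbot : Tendsto (fun t => ∫ s in t₀..t, b (max t₀ s)) atBot atBot := by
    have hlinear : Tendsto (fun t => b t₀ * (t - t₀)) atBot atBot :=
      (tendsto_atBot_add_const_right _ (-t₀) tendsto_id).const_mul_atBot (hpos t₀ self_mem_Ici)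
    refine hlinear.congr' ((eventually_le_atBot t₀).mono fun t ht => ?_)
    have hconst : ∫ s in t₀..t, b (max t₀ s) = ∫ _ in t₀..t, b t₀ :=
      intervalIntegral.integral_congr fun s hs => by
        rw [uIcc_of_ge ht] at hs
        simp only [max_eq_left hs.2]
    simp only [hconst, intervalIntegral.integral_const, smul_eq_mul, mul_comm]
  have hmono : StrictMono fun t => ∫ s in t₀..t, b (max t₀ s) :=
    strictMono_of_hasDerivAt_pos hderiv fun t => hpos _ (hmax t)
  have hsurj : Function.Surjective fun t => ∫ s in t₀..t, b (max t₀ s) :=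
    (continuous_iff_continuousAt.2 fun t => (hderiv t).continuousAt).surjective
      (hdiv.congr' ((eventually_ge_atTop t₀).mono fun t ht => (heq ht).symm)) hbot
  refine ⟨hmono.orderIsoOfSurjective _ hsurj, heq, fun t ht => ?_⟩
  exact (hderiv t).congr_deriv (by rw [max_eq_right (mem_Ioi.1 ht).le])

theorem eventually_sub_eq_integral {e ρ : ℝ → ℝ} {C : ℝ} (hb : ContinuousOn b (Ici t₀))
    (he : ∀ t ∈ Ici t₀, e t = ∫ s in t₀..t, b s) (hρ : ∀ t ∈ Ici t₀, ρ t ∈ Icc 0 C) :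
    (fun t => e t - e (t - ρ t)) =ᶠ[atTop] fun t => ∫ s in (t - ρ t)..t, b s := by
  filter_upwards [eventually_ge_atTop t₀, eventually_ge_atTop (t₀ + C)] with t ht htC
  have hint {u : ℝ} (hu : t₀ ≤ u) : IntervalIntegrable b MeasureTheory.volume t₀ u :=
    (hb.mono (uIcc_of_le hu ▸ Icc_subset_Ici_self)).intervalIntegrable
  have hlag : t₀ ≤ t - ρ t := by linarith [(hρ t ht).2]
  rw [he t ht, he _ hlag, intervalIntegral.integral_interval_sub_left (hint ht) (hint hlag)]

theorem hasDerivAt_orderIso_symm {e : ℝ ≃o ℝ} {d t : ℝ} (he : HasDerivAt e d t) (hd : d ≠ 0) :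
    HasDerivAt e.symm d⁻¹ (e t) :=
  HasDerivAt.of_local_left_inverse e.symm.continuous.continuousAt
    (by rwa [e.symm_apply_apply]) hd (Eventually.of_forall e.apply_symm_apply)

theorem tendsto_integral_atTop_of_pos_le {m : ℝ} (hb : ContinuousOn b (Ici t₀)) (hm : 0 < m)
    (hmb : ∀ t ∈ Ici t₀, m ≤ b t) : Tendsto (fun t => ∫ s in t₀..t, b s) atTop atTop := by
  refine tendsto_atTop_mono' _ ((eventually_ge_atTop t₀).mono fun t ht => ?_)
    ((tendsto_atTop_add_const_right _ (-t₀) tendsto_id).const_mul_atTop hm)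
  have hint : IntervalIntegrable b MeasureTheory.volume t₀ t :=
    (hb.mono (uIcc_of_le ht ▸ Icc_subset_Ici_self)).intervalIntegrable
  calc m * (id t + -t₀) = ∫ _ in t₀..t, m := by
        rw [intervalIntegral.integral_const, smul_eq_mul, mul_comm]; rfl
    _ ≤ ∫ s in t₀..t, b s := intervalIntegral.integral_mono_on ht
        intervalIntegrable_const hint fun s hs => hmb s hs.1

theorem isBoundedUnder_integral_window {ρ : ℝ → ℝ} {B C : ℝ} (hb : ∀ t ∈ Ici t₀, ‖b t‖ ≤ B)
    (hρ : ∀ t ∈ Ici t₀, ρ t ∈ Icc 0 C) :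
    IsBoundedUnder (· ≤ ·) atTop fun t => ∫ s in (t - ρ t)..t, b s := by
  have hB : 0 ≤ B := (norm_nonneg _).trans (hb t₀ self_mem_Ici)
  have hC : 0 ≤ C := (hρ t₀ self_mem_Ici).1.trans (hρ t₀ self_mem_Ici).2
  refine ⟨B * C, eventually_map.2 ((eventually_ge_atTop (t₀ + C)).mono fun t ht => ?_)⟩
  have hρt := hρ t (by simp only [mem_Ici]; linarith)
  calc ∫ s in (t - ρ t)..t, b s ≤ ‖∫ s in (t - ρ t)..t, b s‖ := Real.le_norm_self _
    _ ≤ B * |t - (t - ρ t)| :=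
        intervalIntegral.norm_integral_le_of_norm_le_const fun s hs => by
          rw [uIoc_of_le (sub_le_self t hρt.1)] at hs
          exact hb s (by simp only [mem_Ici]; linarith [hs.1, hρt.2])
    _ ≤ B * C := by
        rw [sub_sub_cancel, abs_of_nonneg hρt.1]
        exact mul_le_mul_of_nonneg_left hρt.2 hB

end Clock

namespace NicholsonSolution1

variable {p a δ t₀ τbar : ℝ} {β τ σ x : ℝ → ℝ}

theorem pos (hx : NicholsonSolution1 p a δ t₀ τbar β τ σ x) (hp : 0 ≤ p)
    (hβc : ContinuousOn β (Ici t₀)) (hβ : ∀ t ∈ Ici t₀, 0 ≤ β t)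
    (hτ : ∀ t ∈ Ici t₀, τ t ∈ Icc 0 τbar) {t : ℝ} (ht : t₀ ≤ t) : 0 < x t := by
  obtain ⟨-, hderiv, hhist, hx0⟩ := hx
  refine pos_of_neg_mul_le_deriv (hβc.const_mul δ) hderiv hx0 (fun u hu hpast => ?_) ht
  have hlag : 0 ≤ x (u - τ u) := by
    rcases lt_or_ge (u - τ u) t₀ with hlt | hge
    · exact hhist _ (by linarith [mem_Ici.1 hu, (hτ u hu).2]) hlt
    · exact hpast _ ⟨hge, sub_le_self u (hτ u hu).1⟩
  have hprod := mul_nonneg (hβ u hu) (mul_nonneg (mul_nonneg hp hlag)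
    (Real.exp_pos (-a * x (u - σ u))).le)
  linarith

theorem exists_normalized (hx : NicholsonSolution1 p a δ t₀ τbar β τ σ x) (hδ : 0 < δ)
    (hp : 0 < p) (ha : 0 < a) (hβc : ContinuousOn β (Ici t₀)) (hβ : ∀ t ∈ Ici t₀, 0 < β t)
    (hτ : ∀ t ∈ Ici t₀, τ t ∈ Icc 0 τbar) (hσ : ∀ t ∈ Ici t₀, σ t ∈ Icc 0 τbar)
    {e : ℝ ≃o ℝ} (he0 : e t₀ = 0) (he : ∀ t ∈ Ioi t₀, HasDerivAt e (δ * β t) t)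
    (heτ : IsBoundedUnder (· ≤ ·) atTop fun t => e t - e (t - τ t))
    (heσ : IsBoundedUnder (· ≤ ·) atTop fun t => e t - e (t - σ t)) :
    ∃ r, NormalizedNicholson (Real.log (p / δ)) r (fun s => s - e (e.symm s - τ (e.symm s)))
      (fun s => s - e (e.symm s - σ (e.symm s))) fun s => a * x (e.symm s) := by
  obtain ⟨B, hB⟩ := heτ.eventually_le
  obtain ⟨C, hC⟩ := heσ.eventually_le
  obtain ⟨T, hT⟩ := eventually_atTop.1 (hB.and hC)
  have hsymm {s : ℝ} (hs : 0 ≤ s) : t₀ ≤ e.symm s := e.le_symm_apply.2 (he0.trans_le hs)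
  have hr {s : ℝ} (hs : max (max B C) (e (max T (t₀ + 1))) < s) :
      T ≤ e.symm s ∧ t₀ < e.symm s := by
    have hlate := e.lt_symm_apply.2 ((le_max_right _ _).trans_lt hs)
    exact ⟨(le_max_left _ _).trans hlate.le,
      (lt_add_one t₀).trans_le ((le_max_right _ _).trans hlate.le)⟩
  refine ⟨max (max B C) (e (max T (t₀ + 1))), ⟨?_, ?_, fun s hs => ?_, fun s hs => ?_⟩⟩
  · have hcont : ContinuousOn x (Ici t₀) := fun t ht => (hx.2.1 t ht).continuousWithinAt
    exact (hcont.comp e.symm.continuous.continuousOn fun s hs => hsymm hs).const_mul a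
  · exact fun s hs => mul_pos ha (hx.pos hp.le hβc (fun t ht => (hβ t ht).le) hτ (hsymm hs))
  · obtain ⟨hTs, hts⟩ := hr hs
    have hmono {ρ : ℝ} (hρ : 0 ≤ ρ) : e (e.symm s - ρ) ≤ s := by
      simpa using e.monotone (sub_le_self (e.symm s) hρ)
    have hwindow := hT _ hTs
    rw [e.apply_symm_apply] at hwindow
    exact ⟨⟨sub_nonneg.2 (hmono (hτ _ hts.le).1),
        hwindow.1.trans ((le_max_left _ _).trans (le_max_left _ _))⟩,
      ⟨sub_nonneg.2 (hmono (hσ _ hts.le).1),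
        hwindow.2.trans ((le_max_right _ _).trans (le_max_left _ _))⟩⟩
  · obtain ⟨-, hts⟩ := hr hs
    have hβs := hβ _ hts.le
    have hsymm' := hasDerivAt_orderIso_symm (he _ hts) (mul_pos hδ hβs).ne'
    rw [e.apply_symm_apply] at hsymm'
    have hderiv := ((((hx.2.1 _ hts.le).hasDerivAt (Ici_mem_nhds hts)).comp s hsymm').const_mul a)
    refine hderiv.congr_deriv ?_
    simp only [sub_sub_cancel, e.symm_apply_apply]
    rw [sub_eq_add_neg (Real.log _), Real.exp_add, Real.exp_log (div_pos hp hδ), neg_mul]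
    field_simp

end NicholsonSolution1

theorem nicholson_one_pair_global_attractivity_general {p a δ t₀ τbar : ℝ} {β τ σ x : ℝ → ℝ}
    (hδ : 0 < δ) (hpδ : δ < p) (ha : 0 < a)
    (hβc : ContinuousOn β (Ici t₀)) (hβ : ∀ t ∈ Ici t₀, 0 < β t)
    (hdiv : Tendsto (fun t => ∫ s in t₀..t, β s) atTop atTop)
    (hτ : ∀ t ∈ Ici t₀, τ t ∈ Icc 0 τbar) (hσ : ∀ t ∈ Ici t₀, σ t ∈ Icc 0 τbar)
    (hτβ : IsBoundedUnder (· ≤ ·) atTop fun t => ∫ s in (t - τ t)..t, β s)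
    (hσβ : IsBoundedUnder (· ≤ ·) atTop fun t => ∫ s in (t - σ t)..t, β s)
    (hcond : (Real.exp (δ * limsup (fun t => ∫ s in (t - σ t)..t, β s) atTop) - 1) *
      Real.log (p / δ) ≤ 1)
    (hx : NicholsonSolution1 p a δ t₀ τbar β τ σ x) :
    Tendsto x atTop (𝓝 ((1 / a) * Real.log (p / δ))) := by
  obtain ⟨e, heint, he⟩ := exists_orderIso_eq_integral (hβc.const_mul δ)
    (fun t ht => mul_pos hδ (hβ t ht))
    (by simpa only [intervalIntegral.integral_const_mul] using hdiv.const_mul_atTop hδ)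
  have hwindow {ρ : ℝ → ℝ} (hρ : ∀ t ∈ Ici t₀, ρ t ∈ Icc 0 τbar) :
      (fun t => e t - e (t - ρ t)) =ᶠ[atTop] fun t => δ * ∫ s in (t - ρ t)..t, β s := by
    simpa only [intervalIntegral.integral_const_mul] using
      eventually_sub_eq_integral (hβc.const_mul δ) heint hρ
  have hmul : Monotone fun z : ℝ => δ * z := monotone_mul_left_of_nonneg hδ.le
  obtain ⟨r, hy⟩ := hx.exists_normalized hδ (hδ.trans hpδ) ha hβc hβ hτ hσ
    (by rw [heint t₀ self_mem_Ici, intervalIntegral.integral_same]) he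
    ((hmul.isBoundedUnder_le_comp hτβ).mono_le (hwindow hτ).le)
    ((hmul.isBoundedUnder_le_comp hσβ).mono_le (hwindow hσ).le)
  have hdelay (c : ℝ) (hc : δ * limsup (fun t => ∫ s in (t - σ t)..t, β s) atTop < c) :
      ∀ᶠ s in atTop, s - e (e.symm s - σ (e.symm s)) < c := by
    filter_upwards [e.symm.tendsto_atTop.eventually ((hwindow hσ).and
      (eventually_lt_of_limsup_lt ((lt_div_iff₀' hδ).2 hc) hσβ))] with s hs
    rw [e.apply_symm_apply] at hs
    exact hs.1.trans_lt ((lt_div_iff₀' hδ).1 hs.2)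
  have hlim := (hy.tendsto_nhds (Real.log_pos ((one_lt_div hδ).2 hpδ)) hdelay hcond).comp
    e.tendsto_atTop
  simpa [Function.comp_def, ha.ne'] using hlim.const_mul (1 / a)

/- STATEMENT 8 (Theorem 3.1): for the one-pair Nicholson equation with p > δ > 0,
   if ζ_M := limsup_{t→∞} ∫_{t−σ(t)}^t β(s) ds satisfies
   (e^{δζ_M} − 1) log(p/δ) ≤ 1, then K = (1/a) log(p/δ) is globally attractive:
   every solution with admissible initial data converges to K. -/
theorem nicholson_one_pair_global_attractivity
    (p a δ : ℝ) (hδ : 0 < δ) (hpδ : δ < p) (ha : 0 < a)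
    (t₀ : ℝ) (β τ σ : ℝ → ℝ)
    (hβc : ContinuousOn β (Set.Ici t₀))
    (hτc : ContinuousOn τ (Set.Ici t₀)) (hσc : ContinuousOn σ (Set.Ici t₀))
    (hτ0 : ∀ t ∈ Set.Ici t₀, 0 ≤ τ t) (hσ0 : ∀ t ∈ Set.Ici t₀, 0 ≤ σ t)
    (βminus : ℝ) (hβminus : IsGLB (β '' Set.Ici t₀) βminus) (hβmpos : 0 < βminus)
    (hβub : ∃ B, ∀ t ∈ Set.Ici t₀, β t ≤ B)
    (τbar : ℝ) (hτbar : IsLUB (τ '' Set.Ici t₀ ∪ σ '' Set.Ici t₀) τbar)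
    -- ζ_M := limsup_{t→∞} ∫_{t−σ(t)}^t β(s) ds
    (ζM : ℝ)
    (hζM : ζM = Filter.limsup (fun t => ∫ s in (t - σ t)..t, β s) Filter.atTop)
    -- hypothesis (h1)
    (hcond : (Real.exp (δ * ζM) - 1) * Real.log (p / δ) ≤ 1)
    -- K = (1/a) log(p/δ)
    (K : ℝ) (hKdef : K = (1 / a) * Real.log (p / δ)) :
    ∀ x : ℝ → ℝ, NicholsonSolution1 p a δ t₀ τbar β τ σ x →
      Filter.Tendsto x Filter.atTop (nhds K) := by
  intro x hx
  subst hKdef hζM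
  obtain ⟨B, hB⟩ := hβub
  have hβ : ∀ t ∈ Ici t₀, βminus ≤ β t := fun t ht => hβminus.1 (mem_image_of_mem β ht)
  have hβB : ∀ t ∈ Ici t₀, ‖β t‖ ≤ B := fun t ht => by
    rw [Real.norm_of_nonneg (hβmpos.le.trans (hβ t ht))]
    exact hB t ht
  have hτ : ∀ t ∈ Ici t₀, τ t ∈ Icc 0 τbar :=
    fun t ht => ⟨hτ0 t ht, hτbar.1 (Or.inl (mem_image_of_mem τ ht))⟩
  have hσ : ∀ t ∈ Ici t₀, σ t ∈ Icc 0 τbar :=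
    fun t ht => ⟨hσ0 t ht, hτbar.1 (Or.inr (mem_image_of_mem σ ht))⟩
  exact nicholson_one_pair_global_attractivity_general hδ hpδ ha hβc
    (fun t ht => hβmpos.trans_le (hβ t ht)) (tendsto_integral_atTop_of_pos_le hβc hβmpos hβ) hτ hσ
    (isBoundedUnder_integral_window hβB hτ) (isBoundedUnder_integral_window hβB hσ) hcond hx
end
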